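/- arXiv:2011.05006 — 3 statements merged into one kernel-verified Lean document; each statement's English description precedes it below -/
import Mathlib

section
/- For every real number q with 0 < q < 1, one has S_odd(q,2) = Π_{i≥1} (1 + q^{2i})²·(1 + q^{i})/(1 − q^{i}), the infinite product converging absolutely. -/
open scoped BigOperators

/-- `He` is the set of sequences `(ω_{-i})_{i ≥ 1}` of non-negative integers (indexed here by
`n : ℕ` with `i = n + 1`) with no two consecutive vanishing entries, agreeing for large `i`
with the sequence which is `1` at even `i` and `0` at odd `i`. -/
def He : Set (ℕ → ℕ) :=
  {ω | (∀ n : ℕ, ¬(ω n = 0 ∧ ω (n + 1) = 0)) ∧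
       (∃ N : ℕ, ∀ n ≥ N, ω n = if (n + 1) % 2 = 0 then 1 else 0)}

/-- `Ho` is as `He`, but agreeing for large `i` with the sequence which is `1` at odd `i`
and `0` at even `i`. -/
def Ho : Set (ℕ → ℕ) :=
  {ω | (∀ n : ℕ, ¬(ω n = 0 ∧ ω (n + 1) = 0)) ∧
       (∃ N : ℕ, ∀ n ≥ N, ω n = if (n + 1) % 2 = 1 then 1 else 0)}

/-- `A(ω) = Σ_{i odd} i·ω_{-i} + Σ_{i even} i·(ω_{-i} − 1)`. -/
noncomputable def Afun (ω : ℕ → ℕ) : ℤ :=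
  ∑ᶠ n : ℕ, (if (n + 1) % 2 = 1 then ((n : ℤ) + 1) * (ω n : ℤ)
             else ((n : ℤ) + 1) * ((ω n : ℤ) - 1))

/-- `B(ω) = 2·(Σ_{i odd} 1{ω_{-i} ≥ 1} − Σ_{i even} 1{ω_{-i} = 0})`. -/
noncomputable def Bfun (ω : ℕ → ℕ) : ℤ :=
  2 * ((∑ᶠ n : ℕ, if (n + 1) % 2 = 1 ∧ 1 ≤ ω n then (1 : ℤ) else 0)
     - (∑ᶠ n : ℕ, if (n + 1) % 2 = 0 ∧ ω n = 0 then (1 : ℤ) else 0))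

/-- `A'(ω) = Σ_{i even} i·ω_{-i} + Σ_{i odd} i·(ω_{-i} − 1)`. -/
noncomputable def A'fun (ω : ℕ → ℕ) : ℤ :=
  ∑ᶠ n : ℕ, (if (n + 1) % 2 = 0 then ((n : ℤ) + 1) * (ω n : ℤ)
             else ((n : ℤ) + 1) * ((ω n : ℤ) - 1))

/-- `B'(ω) = 2·(Σ_{i even} 1{ω_{-i} ≥ 1} − Σ_{i odd} 1{ω_{-i} = 0})`. -/
noncomputable def B'fun (ω : ℕ → ℕ) : ℤ :=
  2 * ((∑ᶠ n : ℕ, if (n + 1) % 2 = 0 ∧ 1 ≤ ω n then (1 : ℤ) else 0)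
     - (∑ᶠ n : ℕ, if (n + 1) % 2 = 1 ∧ ω n = 0 then (1 : ℤ) else 0))

/-- `S_even(q̃, t) = Σ_{ω ∈ H_e} q̃^{A(ω)} t^{B(ω)}`. -/
noncomputable def Seven (q t : ℝ) : ℝ := ∑' ω : He, q ^ Afun ω.1 * t ^ Bfun ω.1

/-- `S_odd(q̃, t) = Σ_{ω ∈ H_o} q̃^{A'(ω)} t^{B'(ω)}`. -/
noncomputable def Sodd (q t : ℝ) : ℝ := ∑' ω : Ho, q ^ A'fun ω.1 * t ^ B'fun ω.1

/-!
The weight of a configuration is a product over its sites. Summing over the positive values at each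
site leaves a hard-core model on a path, with activity `(q⁻ⁿ - 1) / t²` at the site `n`, and the
partition functions of the finite paths are continuants. Choosing `x` with `t² x = (1 + x)²`, so
that `x + x⁻¹ = t² - 2`, identifies these continuants, up to powers of `1 + x`, with Rogers–Szegő
polynomials in base `q⁻¹` at `x`. For a path of even length, passing to Gaussian binomials in base
`q` completes the square in the exponents, and the partition function becomes a finite theta sum
divided by `(q; q)_{2m}`, which tends to a theta series divided by the square of `(q; q)_∞`. The
same finite theta sum with Gaussian binomials in base `q²` is a product by the `q`-binomial theorem;
its limit is the Jacobi triple product, and `1 - q^{2i} = (1 - qⁱ)(1 + qⁱ)` gives the result.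
For real `t` with `t² < 4` the point `x` is not real, so the limit is taken over `ℂ`.
-/

section GaussianBinomials

variable {R : Type*} [CommRing R]

/-- The finite `q`-Pochhammer symbol `(r; r)_n = ∏_{i=1}^n (1 - r^i)`. -/
def qPochhammer (r : R) (n : ℕ) : R := ∏ i ∈ Finset.range n, (1 - r ^ (i + 1))

/-- The Gaussian binomial coefficient `[n choose k]_r`, defined by the `q`-Pascal rule so that it
makes sense for every `r`. -/
def gaussBinom (r : R) : ℕ → ℕ → R
  | _, 0 => 1
  | 0, _ + 1 => 0
  | n + 1, k + 1 => gaussBinom r n k + r ^ (k + 1) * gaussBinom r n (k + 1)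

/-- The Rogers–Szegő polynomial `H_n(x) = ∑_k [n choose k]_r x^k`. -/
def rogersSzego (r : R) (n : ℕ) (x : R) : R :=
  ∑ k ∈ Finset.range (n + 1), gaussBinom r n k * x ^ k

lemma qPochhammer_succ (r : R) (n : ℕ) :
    qPochhammer r (n + 1) = qPochhammer r n * (1 - r ^ (n + 1)) :=
  Finset.prod_range_succ _ _

@[simp]
lemma gaussBinom_zero_right (r : R) (n : ℕ) : gaussBinom r n 0 = 1 := by
  cases n <;> rfl

lemma gaussBinom_succ_succ (r : R) (n k : ℕ) :
    gaussBinom r (n + 1) (k + 1) = gaussBinom r n k + r ^ (k + 1) * gaussBinom r n (k + 1) :=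
  rfl

lemma gaussBinom_eq_zero_of_lt (r : R) {n k : ℕ} (h : n < k) : gaussBinom r n k = 0 := by
  induction n generalizing k with
  | zero => obtain ⟨k, rfl⟩ := Nat.exists_eq_succ_of_ne_zero h.ne'; rfl
  | succ n ih =>
    obtain ⟨k, rfl⟩ := Nat.exists_eq_succ_of_ne_zero (Nat.ne_zero_of_lt h)
    rw [gaussBinom_succ_succ, ih (by omega), ih (by omega), mul_zero, add_zero]

@[simp]
lemma gaussBinom_self (r : R) (n : ℕ) : gaussBinom r n n = 1 := by
  induction n with
  | zero => rfl
  | succ n ih =>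
    rw [gaussBinom_succ_succ, ih, gaussBinom_eq_zero_of_lt r n.lt_succ_self, mul_zero, add_zero]

lemma gaussBinom_succ_succ' (r : R) (i j : ℕ) :
    gaussBinom r (i + j + 1) (j + 1) =
      r ^ i * gaussBinom r (i + j) j + gaussBinom r (i + j) (j + 1) := by
  induction i generalizing j with
  | zero => simp [gaussBinom_eq_zero_of_lt]
  | succ i ihi =>
    induction j with
    | zero =>
      have pascal := gaussBinom_succ_succ r i 0
      have dual := ihi 0
      simp only [add_zero, gaussBinom_zero_right] at pascal dual ⊢
      rw [gaussBinom_succ_succ, gaussBinom_zero_right]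
      linear_combination r * dual - pascal
    | succ j ihj =>
      have dual := ihi (j + 1)
      rw [show i + 1 + (j + 1) = i + j + 1 + 1 by omega, gaussBinom_succ_succ r (i + j + 1 + 1)]
      rw [show i + 1 + j = i + j + 1 by omega] at ihj
      rw [show i + (j + 1) = i + j + 1 by omega] at dual
      linear_combination ihj + r ^ (j + 2) * dual -
        r ^ (i + 1) * gaussBinom_succ_succ r (i + j + 1) j -
        gaussBinom_succ_succ r (i + j + 1) (j + 1)

lemma gaussBinom_symm (r : R) (i j : ℕ) : gaussBinom r (i + j) i = gaussBinom r (i + j) j := by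
  induction i generalizing j with
  | zero => simp
  | succ i ihi =>
    induction j with
    | zero => simp
    | succ j ihj =>
      have ihi := ihi (j + 1)
      rw [show i + (j + 1) = i + 1 + j by omega] at ihi
      rw [show i + 1 + (j + 1) = j + 1 + i + 1 by omega, gaussBinom_succ_succ' r (j + 1) i,
        show j + 1 + i = i + 1 + j by omega, gaussBinom_succ_succ r (i + 1 + j) j, ihj, ihi,
        add_comm]

lemma gaussBinom_succ_succ_mul (r : R) (n k : ℕ) :
    gaussBinom r (n + 1) (k + 1) * (1 - r ^ (k + 1)) = gaussBinom r n k * (1 - r ^ (n + 1)) := by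
  rcases le_or_gt k n with hk | hk
  · obtain ⟨i, rfl⟩ := Nat.exists_eq_add_of_le' hk
    linear_combination gaussBinom_succ_succ r (i + k) k - r ^ (k + 1) * gaussBinom_succ_succ' r i k
  · rw [gaussBinom_eq_zero_of_lt r hk, gaussBinom_eq_zero_of_lt r (Nat.succ_lt_succ hk), zero_mul,
      zero_mul]

lemma gaussBinom_mul_qPochhammer (r : R) (i j : ℕ) :
    gaussBinom r (i + j) j * (qPochhammer r i * qPochhammer r j) = qPochhammer r (i + j) := by
  induction j with
  | zero => simp [qPochhammer]
  | succ j ih =>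
    rw [← add_assoc, qPochhammer_succ r j, qPochhammer_succ r (i + j)]
    linear_combination qPochhammer r i * qPochhammer r j * gaussBinom_succ_succ_mul r (i + j) j +
      (1 - r ^ (i + j + 1)) * ih

lemma gaussBinom_inv {K : Type*} [Field K] {r : K} (hr : r ≠ 0) (i j : ℕ) :
    r ^ (i * j) * gaussBinom r⁻¹ (i + j) j = gaussBinom r (i + j) j := by
  induction i generalizing j with
  | zero => simp
  | succ i ihi =>
    induction j with
    | zero => simp
    | succ j ihj =>
      have ihi := ihi (j + 1)
      rw [show i + (j + 1) = i + 1 + j by omega] at ihi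
      have cancel : r ^ (j + 1) * r⁻¹ ^ (j + 1) = 1 := by
        rw [← mul_pow, mul_inv_cancel₀ hr, one_pow]
      rw [← add_assoc, gaussBinom_succ_succ r⁻¹, gaussBinom_succ_succ' r (i + 1) j, ← ihj, ← ihi]
      linear_combination r ^ (i * (j + 1)) * gaussBinom r⁻¹ (i + 1 + j) (j + 1) * cancel

lemma rogersSzego_add_two (r x : R) (n : ℕ) :
    rogersSzego r (n + 2) x =
      (1 + x) * rogersSzego r (n + 1) x + (r ^ (n + 1) - 1) * x * rogersSzego r n x := by
  have coeff (k : ℕ) : gaussBinom r (n + 2) (k + 1) * x ^ (k + 1) =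
      x * (gaussBinom r (n + 1) k * x ^ k) + gaussBinom r (n + 1) (k + 1) * x ^ (k + 1) +
        (r ^ (n + 1) - 1) * x * (gaussBinom r n k * x ^ k) := by
    rw [gaussBinom_succ_succ r (n + 1)]
    linear_combination -x ^ (k + 1) * gaussBinom_succ_succ_mul r n k
  have tail : ∑ k ∈ Finset.range (n + 2), gaussBinom r (n + 1) (k + 1) * x ^ (k + 1) + 1 =
      rogersSzego r (n + 1) x := by
    simpa [gaussBinom_eq_zero_of_lt, rogersSzego, Finset.sum_range_succ _ (n + 2)] using
      (Finset.sum_range_succ' (fun k => gaussBinom r (n + 1) k * x ^ k) (n + 2)).symm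
  have extra : ∑ k ∈ Finset.range (n + 2), gaussBinom r n k * x ^ k = rogersSzego r n x := by
    rw [Finset.sum_range_succ, gaussBinom_eq_zero_of_lt r n.lt_succ_self, zero_mul, add_zero,
      rogersSzego]
  rw [rogersSzego, Finset.sum_range_succ', Finset.sum_congr rfl fun k _ => coeff k,
    Finset.sum_add_distrib, Finset.sum_add_distrib, ← Finset.mul_sum, ← Finset.mul_sum, extra,
    gaussBinom_zero_right, pow_zero, mul_one, ← rogersSzego]
  linear_combination tail

theorem sum_gaussBinom_mul_pow (r z : R) (n : ℕ) :
    ∑ k ∈ Finset.range (n + 1), r ^ k.choose 2 * gaussBinom r n k * z ^ k =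
      ∏ i ∈ Finset.range n, (1 + z * r ^ i) := by
  induction n generalizing z with
  | zero => simp
  | succ n ih =>
    set a : ℕ → R := fun k => r ^ k.choose 2 * gaussBinom r n k * (z * r) ^ k
    have prod_a : ∑ k ∈ Finset.range (n + 1), a k = ∏ i ∈ Finset.range n, (1 + z * r ^ (i + 1)) :=
      (ih (z * r)).trans (Finset.prod_congr rfl fun i _ => by ring)
    have coeff (k : ℕ) : r ^ (k + 1).choose 2 * gaussBinom r (n + 1) (k + 1) * z ^ (k + 1) =
        z * a k + a (k + 1) := by
      simp only [a, gaussBinom_succ_succ, Nat.choose_succ_succ' k 1, Nat.choose_one_right, pow_add]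
      ring
    have tail : ∑ k ∈ Finset.range (n + 1), a (k + 1) + 1 = ∑ k ∈ Finset.range (n + 1), a k := by
      simpa [a, gaussBinom_eq_zero_of_lt, Finset.sum_range_succ _ (n + 1)] using
        (Finset.sum_range_succ' a (n + 1)).symm
    rw [Finset.sum_range_succ', Finset.sum_congr rfl fun k _ => coeff k, Finset.sum_add_distrib,
      ← Finset.mul_sum, Finset.prod_range_succ', ← prod_a]
    simp only [Nat.choose_zero_succ, gaussBinom_zero_right, pow_zero, mul_one]
    linear_combination tail

end GaussianBinomials

section FiniteTheta

variable {K : Type*} [Field K] {q x : K}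

/-- The finite theta sum `∑_{k=-m}^{m+1} q^{k(k-1)} [2m+1 choose m+k]_r x^k`; the terms `k = s + 1`
and `k = -s`, whose coefficients agree, are combined. The base `r` is kept apart from `q`, since the
bases `q` and `q²` are both used. -/
def thetaSum (r q x : K) (m : ℕ) : K :=
  ∑ s ∈ Finset.range (m + 1),
    q ^ (s * (s + 1)) * (x ^ (s + 1) + x⁻¹ ^ s) * gaussBinom r (2 * m + 1) (m + 1 + s)

lemma sum_range_two_mul_add_two {M : Type*} [AddCommMonoid M] (f : ℕ → M) (m : ℕ) :
    ∑ k ∈ Finset.range (2 * m + 2), f k =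
      ∑ s ∈ Finset.range (m + 1), (f (m + 1 + s) + f (m - s)) := by
  rw [show 2 * m + 2 = (m + 1) + (m + 1) by omega, Finset.sum_range_add, Finset.sum_add_distrib,
    ← Finset.sum_range_reflect f (m + 1), add_comm]
  rfl

/-- Completing the square: `k (2m + 1 - k) = m (m + 1) - s (s + 1)` for `k = m + 1 + s` and for
`k = m - s`. -/
lemma sum_gaussBinom_eq_thetaSum (hq : q ≠ 0) (hx : x ≠ 0) (r : K) (m : ℕ) :
    ∑ k ∈ Finset.range (2 * m + 2),
        q⁻¹ ^ (k * (2 * m + 1 - k)) * gaussBinom r (2 * m + 1) k * x ^ k =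
      q⁻¹ ^ (m * (m + 1)) * x ^ m * thetaSum r q x m := by
  rw [sum_range_two_mul_add_two, thetaSum, Finset.mul_sum]
  refine Finset.sum_congr rfl fun s hs => ?_
  obtain ⟨a, rfl⟩ := Nat.exists_eq_add_of_le (Finset.mem_range_succ_iff.mp hs)
  have q_pow : q⁻¹ ^ ((s + a) * (s + a + 1)) * q ^ (s * (s + 1)) = q⁻¹ ^ (a * (2 * s + a + 1)) := by
    rw [show (s + a) * (s + a + 1) = a * (2 * s + a + 1) + s * (s + 1) by ring, pow_add, mul_assoc,
      ← mul_pow, inv_mul_cancel₀ hq, one_pow, mul_one]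
  have x_pow : x ^ (s + a) * x⁻¹ ^ s = x ^ a := by
    rw [add_comm, pow_add, mul_assoc, ← mul_pow, mul_inv_cancel₀ hx, one_pow, mul_one]
  have symm : gaussBinom r (2 * (s + a) + 1) a =
      gaussBinom r (2 * (s + a) + 1) (s + a + 1 + s) := by
    rw [show 2 * (s + a) + 1 = a + (s + a + 1 + s) by ring, gaussBinom_symm]
  rw [show 2 * (s + a) + 1 - (s + a + 1 + s) = a by omega, Nat.add_sub_cancel_left, symm,
    show 2 * (s + a) + 1 - a = 2 * s + a + 1 by omega, mul_comm (s + a + 1 + s),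
    show s + a + 1 + s = 2 * s + a + 1 by omega, ← q_pow, ← x_pow]
  ring

lemma rogersSzego_inv_eq_thetaSum (hq : q ≠ 0) (hx : x ≠ 0) (m : ℕ) :
    rogersSzego q⁻¹ (2 * m + 1) x = q⁻¹ ^ (m * (m + 1)) * x ^ m * thetaSum q q x m := by
  rw [← sum_gaussBinom_eq_thetaSum hq hx, rogersSzego]
  refine Finset.sum_congr rfl fun k hk => ?_
  obtain ⟨i, hi⟩ := Nat.exists_eq_add_of_le' (Finset.mem_range_succ_iff.mp hk)
  rw [hi, Nat.add_sub_cancel, ← gaussBinom_inv hq, ← mul_assoc, mul_comm k i, ← mul_pow,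
    inv_mul_cancel₀ hq, one_pow, one_mul]

lemma prod_mul_inv_pow_two_mul (q x : K) (m : ℕ) :
    ∏ i ∈ Finset.range m, x * q⁻¹ ^ (2 * (i + 1)) = q⁻¹ ^ (m * (m + 1)) * x ^ m := by
  induction m with
  | zero => simp
  | succ m ih => rw [Finset.prod_range_succ, ih]; ring

lemma prod_range_two_mul_add_one (hq : q ≠ 0) (hx : x ≠ 0) (m : ℕ) :
    ∏ i ∈ Finset.range (2 * m + 1), (1 + x * q⁻¹ ^ (2 * m) * q ^ (2 * i)) =
      q⁻¹ ^ (m * (m + 1)) * x ^ m * ((1 + x) * ∏ i ∈ Finset.range m,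
        (1 + (x + x⁻¹) * q ^ (2 * (i + 1)) + q ^ (4 * (i + 1)))) := by
  have lower : ∏ i ∈ Finset.range m, (1 + x * q⁻¹ ^ (2 * m) * q ^ (2 * i)) =
      ∏ i ∈ Finset.range m, (1 + x * q⁻¹ ^ (2 * (i + 1))) := by
    rw [← Finset.prod_range_reflect]
    refine Finset.prod_congr rfl fun i hi => ?_
    obtain ⟨j, rfl⟩ := Nat.exists_eq_add_of_lt (Finset.mem_range.mp hi)
    rw [show i + j + 1 - 1 - i = j by omega, mul_assoc,
      show 2 * (i + j + 1) = 2 * (i + 1) + 2 * j by ring, pow_add, mul_assoc (q⁻¹ ^ _), ← mul_pow,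
      inv_mul_cancel₀ hq, one_pow, mul_one]
  have upper (i : ℕ) : 1 + x * q⁻¹ ^ (2 * m) * q ^ (2 * (m + i)) = 1 + x * q ^ (2 * i) := by
    rw [mul_add, pow_add, mul_assoc x, ← mul_assoc (q⁻¹ ^ _), ← mul_pow, inv_mul_cancel₀ hq,
      one_pow, one_mul]
  have pair (i : ℕ) : (1 + x * q⁻¹ ^ (2 * (i + 1))) * (1 + x * q ^ (2 * (i + 1))) =
      x * q⁻¹ ^ (2 * (i + 1)) * (1 + (x + x⁻¹) * q ^ (2 * (i + 1)) + q ^ (4 * (i + 1))) := by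
    have power_ne_zero : q ^ (2 * (i + 1)) ≠ 0 := pow_ne_zero _ hq
    rw [show 4 * (i + 1) = 2 * (i + 1) + 2 * (i + 1) by ring, pow_add, inv_pow]
    field
  rw [show 2 * m + 1 = m + (m + 1) by omega, Finset.prod_range_add, lower,
    Finset.prod_congr rfl fun i _ => upper i, Finset.prod_range_succ', mul_zero, pow_zero, mul_one,
    ← mul_assoc, ← Finset.prod_mul_distrib, Finset.prod_congr rfl fun i _ => pair i,
    Finset.prod_mul_distrib, prod_mul_inv_pow_two_mul]
  ring

/-- The case `n = 2m + 1`, `z = q^{-2m} x` of the `q`-binomial theorem in base `q²`. -/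
theorem thetaSum_sq_eq_prod (hq : q ≠ 0) (hx : x ≠ 0) (m : ℕ) :
    thetaSum (q ^ 2) q x m = (1 + x) * ∏ i ∈ Finset.range m,
      (1 + (x + x⁻¹) * q ^ (2 * (i + 1)) + q ^ (4 * (i + 1))) := by
  have prefactor_ne_zero : q⁻¹ ^ (m * (m + 1)) * x ^ m ≠ 0 :=
    mul_ne_zero (pow_ne_zero _ (inv_ne_zero hq)) (pow_ne_zero _ hx)
  refine mul_left_cancel₀ prefactor_ne_zero ?_
  rw [← sum_gaussBinom_eq_thetaSum hq hx, ← prod_range_two_mul_add_one hq hx]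
  simp only [pow_mul q 2]
  rw [← sum_gaussBinom_mul_pow]
  refine Finset.sum_congr rfl fun k hk => ?_
  obtain ⟨j, hj⟩ := Nat.exists_eq_add_of_le (Finset.mem_range_succ_iff.mp hk)
  have exponent : 2 * m * k = k * j + 2 * k.choose 2 := by
    have choose_two : 2 * k.choose 2 + k = k * k := by
      rw [Nat.choose_two_right, Nat.mul_div_cancel' (Nat.even_mul_pred_self k).two_dvd]
      cases k <;> simp [Nat.succ_mul, Nat.mul_succ]
    nlinarith
  have q_pow : (q ^ 2) ^ k.choose 2 * (q⁻¹ ^ (2 * m)) ^ k = q⁻¹ ^ (k * j) := by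
    rw [← pow_mul, ← pow_mul, exponent, pow_add, mul_left_comm, ← mul_pow, mul_inv_cancel₀ hq,
      one_pow, mul_one]
  rw [hj, Nat.add_sub_cancel_left, ← q_pow, mul_pow]
  ring

end FiniteTheta

section Limits

open Filter Topology

variable {𝕜 : Type*} [NormedField 𝕜] {q r x : 𝕜}

/-- The infinite `q`-Pochhammer symbol `(r; r)_∞ = ∏_{i ≥ 1} (1 - r^i)`. -/
noncomputable def qPochhammerInf (r : 𝕜) : 𝕜 := ∏' i : ℕ, (1 - r ^ (i + 1))

/-- The theta series `∑_{k ∈ ℤ} q^{k(k-1)} x^k`, with the terms `k = s + 1` and `k = -s`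
combined. -/
noncomputable def thetaSeries (q x : 𝕜) : 𝕜 :=
  ∑' s : ℕ, q ^ (s * (s + 1)) * (x ^ (s + 1) + x⁻¹ ^ s)

lemma summable_norm_pow_mul_succ (hr : ‖r‖ < 1) {n : ℕ} (hn : n ≠ 0) :
    Summable fun i : ℕ => ‖r ^ (n * (i + 1))‖ := by
  have base_lt_one : ‖r‖ ^ n < 1 := pow_lt_one₀ (norm_nonneg r) hr hn
  simpa only [norm_pow, pow_mul] using
    (summable_nat_add_iff 1).mpr (summable_geometric_of_lt_one (by positivity) base_lt_one)

lemma one_sub_pow_succ_ne_zero (hr : ‖r‖ < 1) (i : ℕ) : 1 - r ^ (i + 1) ≠ 0 := by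
  refine sub_ne_zero.mpr fun h => ?_
  have norm_lt_one : ‖r ^ (i + 1)‖ < 1 := by
    rw [norm_pow]
    exact pow_lt_one₀ (norm_nonneg r) hr i.succ_ne_zero
  rw [← h, norm_one] at norm_lt_one
  exact norm_lt_one.false

lemma qPochhammer_ne_zero (hr : ‖r‖ < 1) (n : ℕ) : qPochhammer r n ≠ 0 :=
  Finset.prod_ne_zero_iff.mpr fun i _ => one_sub_pow_succ_ne_zero hr i

lemma gaussBinom_eq_div (hr : ‖r‖ < 1) (i j : ℕ) :
    gaussBinom r (i + j) j = qPochhammer r (i + j) * (qPochhammer r i)⁻¹ * (qPochhammer r j)⁻¹ := by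
  have := qPochhammer_ne_zero hr i
  have := qPochhammer_ne_zero hr j
  rw [← gaussBinom_mul_qPochhammer]
  field

lemma summable_norm_pow_mul_succ_mul_pow (hq : ‖q‖ < 1) (c : 𝕜) :
    Summable fun s : ℕ => ‖q ^ (s * (s + 1)) * c ^ s‖ := by
  have base_tendsto : Tendsto (fun s : ℕ => ‖q ^ (s + 1) * c‖) atTop (𝓝 0) := by
    simpa using ((tendsto_pow_atTop_nhds_zero_of_norm_lt_one hq).comp
      (tendsto_add_atTop_nat 1)).norm.mul_const ‖c‖
  refine summable_geometric_two.of_norm_bounded_eventually_nat ?_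
  filter_upwards [base_tendsto.eventually_le_const one_half_pos] with s hs
  rw [norm_norm, mul_comm s, pow_mul, ← mul_pow, norm_pow]
  exact pow_le_pow_left₀ (norm_nonneg _) hs s

lemma summable_norm_thetaSeries (hq : ‖q‖ < 1) (x : 𝕜) :
    Summable fun s : ℕ => ‖q ^ (s * (s + 1)) * (x ^ (s + 1) + x⁻¹ ^ s)‖ := by
  refine .of_nonneg_of_le (fun _ => norm_nonneg _) (fun s => ?_)
    (((summable_norm_pow_mul_succ_mul_pow hq x).mul_right ‖x‖).add
      (summable_norm_pow_mul_succ_mul_pow hq x⁻¹))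
  rw [mul_add, pow_succ, ← mul_assoc, ← norm_mul]
  exact norm_add_le _ _

variable [CompleteSpace 𝕜]

lemma multipliable_one_sub_pow_succ (hr : ‖r‖ < 1) :
    Multipliable fun i : ℕ => 1 - r ^ (i + 1) := by
  simpa only [sub_eq_add_neg] using
    multipliable_one_add_of_summable (f := fun i : ℕ => -r ^ (i + 1)) <| by
      simpa using summable_norm_pow_mul_succ hr one_ne_zero

lemma qPochhammerInf_ne_zero (hr : ‖r‖ < 1) : qPochhammerInf r ≠ 0 := by
  simpa only [qPochhammerInf, sub_eq_add_neg] using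
    tprod_one_add_ne_zero_of_summable (f := fun i : ℕ => -r ^ (i + 1))
      (fun i => by simpa only [sub_eq_add_neg] using one_sub_pow_succ_ne_zero hr i)
      (by simpa using summable_norm_pow_mul_succ hr one_ne_zero)

lemma tendsto_qPochhammer (hr : ‖r‖ < 1) :
    Tendsto (qPochhammer r) atTop (𝓝 (qPochhammerInf r)) :=
  (multipliable_one_sub_pow_succ hr).hasProd.tendsto_prod_nat

lemma exists_norm_gaussBinom_le (hr : ‖r‖ < 1) : ∃ C, ∀ n k, ‖gaussBinom r n k‖ ≤ C := by
  obtain ⟨A, hA⟩ := (Metric.isBounded_range_of_tendsto _ (tendsto_qPochhammer hr)).exists_norm_le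
  obtain ⟨B, hB⟩ := (Metric.isBounded_range_of_tendsto _
    ((tendsto_qPochhammer hr).inv₀ (qPochhammerInf_ne_zero hr))).exists_norm_le
  have norm_le (n : ℕ) : ‖qPochhammer r n‖ ≤ A := hA _ ⟨n, rfl⟩
  have norm_inv_le (n : ℕ) : ‖(qPochhammer r n)⁻¹‖ ≤ B := hB _ ⟨n, rfl⟩
  have hA0 : 0 ≤ A := (norm_nonneg _).trans (norm_le 0)
  have hB0 : 0 ≤ B := (norm_nonneg _).trans (norm_inv_le 0)
  refine ⟨A * B * B, fun n k => ?_⟩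
  rcases le_or_gt k n with hk | hk
  · obtain ⟨i, rfl⟩ := Nat.exists_eq_add_of_le' hk
    rw [gaussBinom_eq_div hr, norm_mul, norm_mul]
    gcongr
    exacts [norm_le _, norm_inv_le _, norm_inv_le _]
  · rw [gaussBinom_eq_zero_of_lt r hk, norm_zero]
    positivity

lemma tendsto_gaussBinom_central (hr : ‖r‖ < 1) (s : ℕ) :
    Tendsto (fun m => gaussBinom r (2 * m + 1) (m + 1 + s)) atTop (𝓝 (qPochhammerInf r)⁻¹) := by
  have top_tendsto : Tendsto (fun m => 2 * m + 1) atTop atTop :=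
    tendsto_atTop_mono (fun m => (by omega : m ≤ 2 * m + 1)) tendsto_id
  have upper_tendsto : Tendsto (fun m => m + 1 + s) atTop atTop :=
    tendsto_atTop_mono (fun m => (by omega : m ≤ m + 1 + s)) tendsto_id
  have inv_tendsto := (tendsto_qPochhammer hr).inv₀ (qPochhammerInf_ne_zero hr)
  have limit := (((tendsto_qPochhammer hr).comp top_tendsto).mul
    (inv_tendsto.comp (tendsto_sub_atTop_nat s))).mul (inv_tendsto.comp upper_tendsto)
  rw [mul_inv_cancel₀ (qPochhammerInf_ne_zero hr), one_mul] at limit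
  refine limit.congr' ?_
  filter_upwards [eventually_ge_atTop s] with m hm
  have split : 2 * m + 1 = m - s + (m + 1 + s) := by omega
  simp only [Function.comp_apply]
  rw [split, gaussBinom_eq_div hr]

lemma tendsto_thetaSum (hq : ‖q‖ < 1) (hr : ‖r‖ < 1) (x : 𝕜) :
    Tendsto (thetaSum r q x) atTop (𝓝 (thetaSeries q x * (qPochhammerInf r)⁻¹)) := by
  obtain ⟨C, hC⟩ := exists_norm_gaussBinom_le hr
  have thetaSum_eq_tsum (m : ℕ) : thetaSum r q x m = ∑' s : ℕ,
      q ^ (s * (s + 1)) * (x ^ (s + 1) + x⁻¹ ^ s) * gaussBinom r (2 * m + 1) (m + 1 + s) := by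
    refine (tsum_eq_sum fun s hs => ?_).symm
    rw [Finset.mem_range] at hs
    rw [gaussBinom_eq_zero_of_lt r (by omega), mul_zero]
  rw [funext thetaSum_eq_tsum, thetaSeries, ← tsum_mul_right]
  refine tendsto_tsum_of_dominated_convergence ((summable_norm_thetaSeries hq x).mul_right C)
    (fun s => (tendsto_gaussBinom_central hr s).const_mul _) (.of_forall fun m s => ?_)
  rw [norm_mul]
  exact mul_le_mul_of_nonneg_left (hC _ _) (norm_nonneg _)

lemma multipliable_one_add_mul_pow_add_pow (hq : ‖q‖ < 1) (c : 𝕜) :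
    Multipliable fun i : ℕ => 1 + c * q ^ (2 * (i + 1)) + q ^ (4 * (i + 1)) := by
  simp only [add_assoc]
  refine multipliable_one_add_of_summable (.of_nonneg_of_le (fun _ => norm_nonneg _)
    (fun i => norm_add_le _ _) (.add ?_ (summable_norm_pow_mul_succ hq four_ne_zero)))
  simpa only [norm_mul] using (summable_norm_pow_mul_succ hq two_ne_zero).mul_left ‖c‖

theorem jacobi_triple_product (hq0 : q ≠ 0) (hq : ‖q‖ < 1) (hx : x ≠ 0) :
    thetaSeries q x = (1 + x) * (qPochhammerInf (q ^ 2) *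
      ∏' i : ℕ, (1 + (x + x⁻¹) * q ^ (2 * (i + 1)) + q ^ (4 * (i + 1)))) := by
  have hq_sq : ‖q ^ 2‖ < 1 := by
    rw [norm_pow]
    exact pow_lt_one₀ (norm_nonneg q) hq two_ne_zero
  have sum_limit := tendsto_thetaSum hq hq_sq x
  rw [funext (thetaSum_sq_eq_prod hq0 hx)] at sum_limit
  have prod_limit := (multipliable_one_add_mul_pow_add_pow hq
    (x + x⁻¹)).hasProd.tendsto_prod_nat.const_mul (1 + x)
  rw [← div_eq_mul_inv] at sum_limit
  rw [(div_eq_iff (qPochhammerInf_ne_zero hq_sq)).mp (tendsto_nhds_unique sum_limit prod_limit)]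
  ring

lemma multipliable_one_add_pow_succ (hq : ‖q‖ < 1) : Multipliable fun i : ℕ => 1 + q ^ (i + 1) :=
  multipliable_one_add_of_summable (by simpa using summable_norm_pow_mul_succ hq one_ne_zero)

lemma qPochhammerInf_sq (hq : ‖q‖ < 1) :
    qPochhammerInf (q ^ 2) = (∏' i : ℕ, (1 + q ^ (i + 1))) * qPochhammerInf q := by
  rw [qPochhammerInf, qPochhammerInf, ← (multipliable_one_add_pow_succ hq).tprod_mul
    (multipliable_one_sub_pow_succ hq)]
  exact tprod_congr fun i => by ring

lemma multipliable_one_add_mul_pow_add_pow_mul_div (hq : ‖q‖ < 1) (c : 𝕜) :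
    Multipliable fun i : ℕ => (1 + c * q ^ (2 * (i + 1)) + q ^ (4 * (i + 1))) *
      (1 + q ^ (i + 1)) / (1 - q ^ (i + 1)) :=
  ((multipliable_one_add_mul_pow_add_pow hq c).mul (multipliable_one_add_pow_succ hq)).div₀
    (multipliable_one_sub_pow_succ hq) (qPochhammerInf_ne_zero hq)

theorem tendsto_thetaSum_div_qPochhammer (hq0 : q ≠ 0) (hq : ‖q‖ < 1) (hx : x ≠ 0) :
    Tendsto (fun m => thetaSum q q x m / qPochhammer q (2 * m)) atTop
      (𝓝 ((1 + x) * ∏' i : ℕ, (1 + (x + x⁻¹) * q ^ (2 * (i + 1)) + q ^ (4 * (i + 1))) *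
        (1 + q ^ (i + 1)) / (1 - q ^ (i + 1)))) := by
  have inf_ne_zero := qPochhammerInf_ne_zero hq
  have numerator := multipliable_one_add_mul_pow_add_pow hq (x + x⁻¹)
  have double_tendsto : Tendsto (fun m => 2 * m) atTop atTop :=
    tendsto_id.const_mul_atTop' two_pos
  have limit := (tendsto_thetaSum hq hq x).div ((tendsto_qPochhammer hq).comp double_tendsto)
    inf_ne_zero
  rw [(numerator.mul (multipliable_one_add_pow_succ hq)).tprod_div₀
    (multipliable_one_sub_pow_succ hq) inf_ne_zero, numerator.tprod_mul
    (multipliable_one_add_pow_succ hq), ← qPochhammerInf]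
  convert limit using 2
  · rfl
  · rw [jacobi_triple_product hq0 hq hx, qPochhammerInf_sq hq]
    field

end Limits

section Continuants

variable {R : Type*} [CommRing R]

/-- The solution of `K_{n+2} = K_{n+1} + y_n K_n` with `K_0 = K_1 = 1`. The polynomial `K_{n+1}` is
the partition function of the hard-core model on the path `0, …, n - 1` with activities `y_i`. -/
def continuant (y : ℕ → R) : ℕ → R
  | 0 => 1
  | 1 => 1
  | n + 2 => continuant y (n + 1) + y n * continuant y n

lemma map_continuant {S : Type*} [CommRing S] (f : R →+* S) (y : ℕ → R) (n : ℕ) :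
    f (continuant y n) = continuant (fun i => f (y i)) n := by
  induction n using Nat.twoStepInduction with
  | zero => exact map_one f
  | one => exact map_one f
  | more n ih₀ ih₁ => rw [continuant, map_add, map_mul, ih₀, ih₁, continuant]

lemma rogersSzego_eq_continuant {r x : R} {y : ℕ → R}
    (hy : ∀ n, (1 + x) ^ 2 * y n = (r ^ (n + 1) - 1) * x) (n : ℕ) :
    rogersSzego r n x = (1 + x) ^ n * continuant y n := by
  induction n using Nat.twoStepInduction with
  | zero => simp [rogersSzego, continuant]
  | one => simp [rogersSzego, Finset.sum_range_succ, continuant]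
  | more n ih₀ ih₁ =>
    rw [rogersSzego_add_two, ih₀, ih₁, continuant]
    linear_combination -(1 + x) ^ n * continuant y n * hy n

lemma continuant_eq_thetaSum {K : Type*} [Field K] {q x T : K} (hq : q ≠ 0) (hx : x ≠ 0)
    (hT : T ≠ 0) (hTx : T * x = (1 + x) ^ 2) (m : ℕ) :
    (1 + x) * (T ^ m * q ^ (m * (m + 1)) *
      continuant (fun n => (q⁻¹ ^ (n + 1) - 1) / T) (2 * m + 1)) = thetaSum q q x m := by
  have activity (n : ℕ) :
      (1 + x) ^ 2 * ((q⁻¹ ^ (n + 1) - 1) / T) = (q⁻¹ ^ (n + 1) - 1) * x := by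
    rw [← hTx]
    field
  have rogersSzego_eq := rogersSzego_eq_continuant activity (2 * m + 1)
  rw [rogersSzego_inv_eq_thetaSum hq hx, pow_succ (1 + x), pow_mul (1 + x), ← hTx,
    mul_pow] at rogersSzego_eq
  have q_cancel : q ^ (m * (m + 1)) * q⁻¹ ^ (m * (m + 1)) = 1 := by
    rw [← mul_pow, mul_inv_cancel₀ hq, one_pow]
  refine mul_left_cancel₀ (pow_ne_zero m hx) ?_
  linear_combination x ^ m * thetaSum q q x m * q_cancel - q ^ (m * (m + 1)) * rogersSzego_eq

end Continuants

section HardCoreWords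

/-- Words `u_0 ⋯ u_{N-1}` of non-negative integers without two consecutive zeros. -/
def hardCoreWords (N : ℕ) : Set (Fin N → ℕ) :=
  {u | ∀ i j : Fin N, (j : ℕ) = i + 1 → u i ≠ 0 ∨ u j ≠ 0}

/-- Words whose last letter, if there is one, does not vanish; these can be continued by `0`. -/
def nonzeroEndWords (N : ℕ) : Set (Fin N → ℕ) :=
  {u | ∀ i : Fin N, (i : ℕ) + 1 = N → u i ≠ 0}

/-- The product of the letter weights of a word. -/
def wordWeight (w : ℕ → ℕ → ℝ) {N : ℕ} (u : Fin N → ℕ) : ℝ := ∏ i : Fin N, w i (u i)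

lemma mem_hardCoreWords_succ {N : ℕ} {u : Fin (N + 1) → ℕ} :
    u ∈ hardCoreWords (N + 1) ↔ Fin.init u ∈ hardCoreWords N ∧
      (u (Fin.last N) ≠ 0 ∨ Fin.init u ∈ nonzeroEndWords N) := by
  have not_succ (j : Fin N) : (j : ℕ) ≠ N + 1 := by omega
  simp only [hardCoreWords, nonzeroEndWords, Set.mem_ofPred_eq, Fin.forall_fin_succ', Fin.init,
    Fin.val_castSucc, Fin.val_last, not_succ, IsEmpty.forall_iff, implies_true, and_true,
    forall_and, @eq_comm _ N]
  grind

lemma mem_nonzeroEndWords_succ {N : ℕ} {u : Fin (N + 1) → ℕ} :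
    u ∈ nonzeroEndWords (N + 1) ↔ u (Fin.last N) ≠ 0 := by
  have not_last (i : Fin N) : (i : ℕ) ≠ N := i.isLt.ne
  simp [nonzeroEndWords, Fin.forall_fin_succ', not_last]

lemma hasSum_compl_zero_indicator {f : ℕ → ℝ} {a : ℝ} (h : HasSum (fun k => f (k + 1)) a) :
    HasSum (({0}ᶜ : Set ℕ).indicator f) a := by
  simpa using (hasSum_nat_add_iff (f := ({0}ᶜ : Set ℕ).indicator f) 1).mp
    (by simpa [Set.indicator] using h)

lemma hasSum_zero_indicator (f : ℕ → ℝ) : HasSum (({0} : Set ℕ).indicator f) (f 0) := by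
  simpa using hasSum_single (f := ({0} : Set ℕ).indicator f) 0 fun k hk => by simp [hk]

lemma hasSum_last_mul_init {N : ℕ} {f : ℕ → ℝ} {g : (Fin N → ℕ) → ℝ} {a b : ℝ} (hf : HasSum f a)
    (hg : HasSum g b) (hf0 : 0 ≤ f) (hg0 : 0 ≤ g) :
    HasSum (fun u : Fin (N + 1) → ℕ => f (u (Fin.last N)) * g (Fin.init u)) (a * b) :=
  ((Fin.snocEquiv fun _ => ℕ).symm.hasSum_iff
    (f := fun p : ℕ × (Fin N → ℕ) => f p.1 * g p.2)).mpr <|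
    hf.mul hg (hf.summable.mul_of_nonneg hg.summable hf0 hg0)

lemma wordWeight_succ (w : ℕ → ℕ → ℝ) {N : ℕ} (u : Fin (N + 1) → ℕ) :
    wordWeight w u = w N (u (Fin.last N)) * wordWeight w (Fin.init u) := by
  rw [wordWeight, Fin.prod_univ_castSucc, mul_comm]
  rfl

lemma indicator_nonzeroEndWords_succ (w : ℕ → ℕ → ℝ) {N : ℕ} (u : Fin (N + 1) → ℕ) :
    (hardCoreWords (N + 1) ∩ nonzeroEndWords (N + 1)).indicator (wordWeight w) u =
      ({0}ᶜ : Set ℕ).indicator (w N) (u (Fin.last N)) *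
        (hardCoreWords N).indicator (wordWeight w) (Fin.init u) := by
  classical
  by_cases u (Fin.last N) = 0 <;>
    simp_all [Set.indicator_apply, mem_hardCoreWords_succ, mem_nonzeroEndWords_succ,
      wordWeight_succ]

lemma indicator_hardCoreWords_succ (w : ℕ → ℕ → ℝ) {N : ℕ} (u : Fin (N + 1) → ℕ) :
    (hardCoreWords (N + 1)).indicator (wordWeight w) u =
      ({0}ᶜ : Set ℕ).indicator (w N) (u (Fin.last N)) *
          (hardCoreWords N).indicator (wordWeight w) (Fin.init u) +
        ({0} : Set ℕ).indicator (w N) (u (Fin.last N)) *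
          (hardCoreWords N ∩ nonzeroEndWords N).indicator (wordWeight w) (Fin.init u) := by
  classical
  by_cases u (Fin.last N) = 0 <;>
    simp_all [Set.indicator_apply, mem_hardCoreWords_succ, wordWeight_succ]

/-- The transfer matrix, in the two states "arbitrary last letter" and "non-zero last letter". -/
theorem hasSum_hardCoreWords_and_nonzeroEnd {w : ℕ → ℕ → ℝ} {c y : ℕ → ℝ} (hw : ∀ n k, 0 ≤ w n k)
    (hc : ∀ n, HasSum (fun k => w n (k + 1)) (c n)) (hy : ∀ n, w n 0 = c n * y n) (N : ℕ) :
    HasSum ((hardCoreWords N).indicator (wordWeight w))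
        ((∏ n ∈ Finset.range N, c n) * continuant y (N + 1)) ∧
      HasSum ((hardCoreWords N ∩ nonzeroEndWords N).indicator (wordWeight w))
        ((∏ n ∈ Finset.range N, c n) * continuant y N) := by
  induction N with
  | zero =>
    have full : hardCoreWords 0 = Set.univ := Set.eq_univ_of_forall fun _ i => i.elim0
    have nonzero_full : nonzeroEndWords 0 = Set.univ := Set.eq_univ_of_forall fun _ i => i.elim0
    have empty_word : HasSum (wordWeight w : (Fin 0 → ℕ) → ℝ) 1 := by
      simpa [wordWeight] using hasSum_unique (wordWeight w : (Fin 0 → ℕ) → ℝ)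
    simpa [full, nonzero_full, continuant] using empty_word
  | succ N ih =>
    have word_nonneg (s : Set (Fin N → ℕ)) : 0 ≤ s.indicator (wordWeight w) :=
      Set.indicator_nonneg fun u _ => Finset.prod_nonneg fun i _ => hw i (u i)
    have letter_nonneg (s : Set ℕ) : 0 ≤ s.indicator (w N) := Set.indicator_nonneg fun k _ => hw N k
    have nonzero_end := hasSum_last_mul_init (hasSum_compl_zero_indicator (hc N)) ih.1
      (letter_nonneg _) (word_nonneg _)
    have zero_end := hasSum_last_mul_init (hasSum_zero_indicator (w N)) ih.2
      (letter_nonneg _) (word_nonneg _)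
    constructor
    · rw [funext (indicator_hardCoreWords_succ w)]
      convert nonzero_end.add zero_end using 1
      rw [Finset.prod_range_succ, continuant, hy]
      ring
    · rw [funext (indicator_nonzeroEndWords_succ w)]
      convert nonzero_end using 1
      rw [Finset.prod_range_succ]
      ring

end HardCoreWords

section Configurations

open Filter Topology

theorem hasSum_of_tendsto_hasSum_indicator {ι κ α : Type*} [AddCommMonoid α] [LinearOrder α]
    [IsOrderedAddMonoid α] [TopologicalSpace α] [OrderTopology α] {l : Filter κ} [l.NeBot]
    {f : ι → α} {S : κ → Set ι} {a : κ → α} {b : α} (hf : 0 ≤ f)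
    (hS : ∀ i, ∀ᶠ k in l, i ∈ S k) (ha : ∀ k, HasSum ((S k).indicator f) (a k))
    (hb : Tendsto a l (𝓝 b)) : HasSum f b := by
  have indicator_nonneg (k : κ) (i : ι) : 0 ≤ (S k).indicator f i :=
    Set.indicator_nonneg (fun i _ => hf i) i
  refine hasSum_of_isLUB_of_nonneg b hf ⟨?_, fun c hc => ?_⟩
  · rintro _ ⟨s, rfl⟩
    refine ge_of_tendsto hb ?_
    filter_upwards [(eventually_all_finset s).mpr fun i _ => hS i] with k hk
    rw [← Finset.sum_congr rfl fun i hi => Set.indicator_of_mem (hk i hi) f]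
    exact sum_le_hasSum s (fun i _ => indicator_nonneg k i) (ha k)
  · refine le_of_tendsto' hb fun k => hasSum_le_of_sum_le (ha k) fun s => ?_
    exact (Finset.sum_le_sum fun i _ => Set.indicator_le_self' (fun i _ => hf i) i).trans
      (hc ⟨s, rfl⟩)

/-- The configuration which is `1` at odd sites `n + 1` and `0` at even ones. -/
def groundState (n : ℕ) : ℕ := if (n + 1) % 2 = 1 then 1 else 0

/-- The contribution to `A'` of the value `k` at the site `n + 1`. -/
def energyAt (n k : ℕ) : ℤ :=
  if (n + 1) % 2 = 0 then ((n : ℤ) + 1) * k else ((n : ℤ) + 1) * (k - 1)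

/-- The contribution to `B' / 2` of the value `k` at the site `n + 1`. -/
def chargeAt (n k : ℕ) : ℤ :=
  (if (n + 1) % 2 = 0 ∧ 1 ≤ k then 1 else 0) - (if (n + 1) % 2 = 1 ∧ k = 0 then 1 else 0)

/-- The contribution to `q^{A'} t^{B'}` of the value `k` at the site `n + 1`. -/
noncomputable def siteWeight (q t : ℝ) (n k : ℕ) : ℝ := q ^ energyAt n k * t ^ (2 * chargeAt n k)

/-- The continuation of a word by the ground state. -/
def extendByGroundState {N : ℕ} (u : Fin N → ℕ) (n : ℕ) : ℕ :=
  if h : n < N then u ⟨n, h⟩ else groundState n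

/-- The elements of `Ho` which agree with the ground state beyond the first `2m` sites. -/
def truncatedConfigs (m : ℕ) : Set Ho := {ω | ∀ n ≥ 2 * m, ω.1 n = groundState n}

lemma groundState_eq_zero_iff {n : ℕ} : groundState n = 0 ↔ (n + 1) % 2 = 0 := by
  grind [groundState]

section SiteWeights

variable {q t : ℝ}

lemma siteWeight_succ (hq : q ≠ 0) (n k : ℕ) :
    siteWeight q t n (k + 1) = siteWeight q t n 1 * (q ^ (n + 1)) ^ k := by
  have energy : energyAt n (k + 1) = energyAt n 1 + ((n + 1) * k : ℕ) := by
    simp only [energyAt]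
    split_ifs <;> push_cast <;> ring
  have charge : chargeAt n (k + 1) = chargeAt n 1 := by simp [chargeAt]
  rw [siteWeight, siteWeight, energy, charge, zpow_add₀ hq, zpow_natCast, pow_mul]
  ring

lemma siteWeight_one (hq : q ≠ 0) (ht : t ≠ 0) (n : ℕ) :
    siteWeight q t n 1 = siteWeight q t n 0 * (t ^ 2 * q ^ (n + 1)) := by
  have energy : energyAt n 1 = energyAt n 0 + (n + 1 : ℕ) := by
    simp only [energyAt]
    split_ifs <;> simp
  have charge : 2 * chargeAt n 1 = 2 * chargeAt n 0 + (2 : ℕ) := by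
    grind [chargeAt]
  rw [siteWeight, siteWeight, energy, charge, zpow_add₀ hq, zpow_add₀ ht, zpow_natCast,
    zpow_natCast]
  ring

lemma siteWeight_nonneg (hq : 0 ≤ q) (n k : ℕ) : 0 ≤ siteWeight q t n k :=
  mul_nonneg (zpow_nonneg hq _) ((even_two_mul _).zpow_nonneg t)

lemma hasSum_siteWeight_succ (hq0 : 0 < q) (hq1 : q < 1) (n : ℕ) :
    HasSum (fun k => siteWeight q t n (k + 1)) (siteWeight q t n 1 / (1 - q ^ (n + 1))) := by
  rw [funext (siteWeight_succ hq0.ne' n)]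
  exact (hasSum_geometric_of_lt_one (by positivity)
    (pow_lt_one₀ hq0.le hq1 n.succ_ne_zero)).mul_left _

lemma siteWeight_zero (hq0 : 0 < q) (hq1 : q < 1) (ht : t ≠ 0) (n : ℕ) :
    siteWeight q t n 0 = siteWeight q t n 1 / (1 - q ^ (n + 1)) *
      ((q⁻¹ ^ (n + 1) - 1) / t ^ 2) := by
  have one_sub_ne_zero : 1 - q ^ (n + 1) ≠ 0 :=
    (sub_pos.mpr (pow_lt_one₀ hq0.le hq1 n.succ_ne_zero)).ne'
  have := hq0.ne'
  rw [siteWeight_one this ht, inv_pow]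
  field

lemma prod_siteWeight_one (m : ℕ) :
    ∏ n ∈ Finset.range (2 * m), siteWeight q t n 1 = (t ^ 2) ^ m * q ^ (m * (m + 1)) := by
  induction m with
  | zero => simp
  | succ m ih =>
    have odd_site : siteWeight q t (2 * m) 1 = 1 := by
      simp [siteWeight, energyAt, chargeAt, Nat.add_mod]
    have even_site : siteWeight q t (2 * m + 1) 1 = q ^ (2 * (m + 1)) * t ^ 2 := by
      have energy : energyAt (2 * m + 1) 1 = (2 * (m + 1) : ℕ) := by
        simp [energyAt, Nat.add_mod]
        ring
      have charge : 2 * chargeAt (2 * m + 1) 1 = (2 : ℕ) := by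
        simp [chargeAt, Nat.add_mod]
      rw [siteWeight, energy, charge, zpow_natCast, zpow_natCast]
    rw [Nat.mul_succ, Finset.prod_range_succ, Finset.prod_range_succ, ih, odd_site, even_site]
    ring

lemma weight_eq_prod_siteWeight (hq : q ≠ 0) (ht : t ≠ 0) {ω : ℕ → ℕ} {N : ℕ}
    (hω : ∀ n ≥ N, ω n = groundState n) :
    q ^ A'fun ω * t ^ B'fun ω = ∏ n ∈ Finset.range N, siteWeight q t n (ω n) := by
  have finsum_eq (f : ℕ → ℤ) (hf : ∀ n ≥ N, f n = 0) :
      ∑ᶠ n, f n = ∑ n ∈ Finset.range N, f n := by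
    refine finsum_eq_sum_of_support_subset f fun n hn => ?_
    rw [Finset.coe_range, Set.mem_Iio]
    exact not_le.mp fun h => hn (hf n h)
  have energy : A'fun ω = ∑ n ∈ Finset.range N, energyAt n (ω n) :=
    finsum_eq _ fun n hn => by grind [groundState]
  have charge : B'fun ω = 2 * ∑ n ∈ Finset.range N, chargeAt n (ω n) := by
    rw [B'fun, finsum_eq _ fun n hn => by grind [groundState],
      finsum_eq _ fun n hn => by grind [groundState], ← Finset.sum_sub_distrib]
    rfl
  rw [energy, charge]
  clear * - hq ht
  induction N with
  | zero => simp
  | succ N ih =>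
    rw [Finset.sum_range_succ, Finset.sum_range_succ, mul_add, zpow_add₀ hq, zpow_add₀ ht,
      Finset.prod_range_succ, ← ih, siteWeight]
    ring

end SiteWeights

lemma extendByGroundState_apply {N : ℕ} (u : Fin N → ℕ) (i : Fin N) :
    extendByGroundState u i = u i :=
  dif_pos i.isLt

lemma extendByGroundState_of_le {N n : ℕ} (u : Fin N → ℕ) (h : N ≤ n) :
    extendByGroundState u n = groundState n :=
  dif_neg h.not_gt

lemma extendByGroundState_mem_Ho {m : ℕ} {u : Fin (2 * m) → ℕ} (hu : u ∈ hardCoreWords (2 * m)) :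
    extendByGroundState u ∈ Ho := by
  refine ⟨fun n ⟨h₀, h₁⟩ => ?_, 2 * m, fun n hn => extendByGroundState_of_le u hn⟩
  rcases lt_or_ge (n + 1) (2 * m) with hn | hn
  · rw [← Fin.val_mk (Nat.lt_of_succ_lt hn), extendByGroundState_apply] at h₀
    rw [← Fin.val_mk hn, extendByGroundState_apply] at h₁
    exact (hu ⟨n, _⟩ ⟨n + 1, hn⟩ rfl).elim (· h₀) (· h₁)
  · rw [extendByGroundState_of_le u hn, groundState_eq_zero_iff] at h₁
    rw [extendByGroundState_of_le u (by omega), groundState_eq_zero_iff] at h₀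
    omega

/-- Truncated configurations are hard-core words: the continuation starts with a non-zero entry,
so that the last letter of the word is arbitrary. -/
def hardCoreWordsEquiv (m : ℕ) : hardCoreWords (2 * m) ≃ truncatedConfigs m where
  toFun u := ⟨⟨extendByGroundState u.1, extendByGroundState_mem_Ho u.2⟩,
    fun _ hn => extendByGroundState_of_le u.1 hn⟩
  invFun ω := ⟨fun i => ω.1.1 i, fun i j hij => by
    have := ω.1.2.1 i
    grind⟩
  left_inv u := Subtype.ext <| funext <| extendByGroundState_apply u.1
  right_inv ω := by
    refine Subtype.ext <| Subtype.ext <| funext fun n => ?_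
    rcases lt_or_ge n (2 * m) with hn | hn
    · exact dif_pos hn
    · exact (extendByGroundState_of_le _ hn).trans (ω.2 n hn).symm

theorem hasSum_truncatedConfigs {q t : ℝ} (hq0 : 0 < q) (hq1 : q < 1) (ht : t ≠ 0) (m : ℕ) :
    HasSum ((truncatedConfigs m).indicator fun ω => q ^ A'fun ω.1 * t ^ B'fun ω.1)
      ((t ^ 2) ^ m * q ^ (m * (m + 1)) *
        continuant (fun n => (q⁻¹ ^ (n + 1) - 1) / t ^ 2) (2 * m + 1) / qPochhammer q (2 * m)) := by
  have words := (hasSum_hardCoreWords_and_nonzeroEnd (siteWeight_nonneg (t := t) hq0.le)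
    (hasSum_siteWeight_succ hq0 hq1) (siteWeight_zero hq0 hq1 ht) (2 * m)).1
  rw [Finset.prod_div_distrib, prod_siteWeight_one, ← qPochhammer, div_mul_eq_mul_div,
    ← hasSum_subtype_iff_indicator] at words
  rw [← hasSum_subtype_iff_indicator, ← (hardCoreWordsEquiv m).hasSum_iff]
  convert words using 1
  ext u
  have agree : ∀ n ≥ 2 * m, extendByGroundState u.1 n = groundState n :=
    fun _ hn => extendByGroundState_of_le u.1 hn
  simp only [Function.comp_apply, hardCoreWordsEquiv, Equiv.coe_fn_mk, wordWeight,
    weight_eq_prod_siteWeight hq0.ne' ht agree, Finset.prod_range, extendByGroundState_apply]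

end Configurations

section PartitionFunction

open Filter Topology

lemma tendsto_continuant_div_qPochhammer_of_mul_eq_sq {𝕜 : Type*} [NormedField 𝕜] [CompleteSpace 𝕜]
    {q x T : 𝕜} (hq0 : q ≠ 0) (hq : ‖q‖ < 1) (hx : x ≠ 0) (hT : T ≠ 0) (hTx : T * x = (1 + x) ^ 2) :
    Tendsto (fun m => T ^ m * q ^ (m * (m + 1)) *
        continuant (fun n => (q⁻¹ ^ (n + 1) - 1) / T) (2 * m + 1) / qPochhammer q (2 * m)) atTop
      (𝓝 (∏' i : ℕ, (1 + (T - 2) * q ^ (2 * (i + 1)) + q ^ (4 * (i + 1))) *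
        (1 + q ^ (i + 1)) / (1 - q ^ (i + 1)))) := by
  have one_add_ne_zero : 1 + x ≠ 0 := fun h => mul_ne_zero hT hx (by rw [hTx, h, sq, zero_mul])
  have add_inv : x + x⁻¹ = T - 2 := by
    field_simp
    linear_combination -hTx
  have limit := (tendsto_thetaSum_div_qPochhammer hq0 hq hx).const_mul (1 + x)⁻¹
  simpa only [← continuant_eq_thetaSum hq0 hx hT hTx, mul_div_assoc, add_inv,
    inv_mul_cancel_left₀ one_add_ne_zero] using limit

lemma exists_mul_eq_one_add_sq {K : Type*} [Field K] [IsAlgClosed K] [NeZero (2 : K)] (T : K) :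
    ∃ x : K, x ≠ 0 ∧ T * x = (1 + x) ^ 2 := by
  obtain ⟨x, hx⟩ := exists_quadratic_eq_zero (b := 2 - T) (c := 1) (one_ne_zero (α := K))
    (IsAlgClosed.exists_eq_mul_self _)
  have hx0 : x ≠ 0 := by
    rintro rfl
    simp at hx
  exact ⟨x, hx0, by linear_combination -hx⟩

lemma tendsto_continuant_div_qPochhammer {q T : ℝ} (hq0 : q ≠ 0) (hq : ‖q‖ < 1) (hT : T ≠ 0) :
    Tendsto (fun m => T ^ m * q ^ (m * (m + 1)) *
        continuant (fun n => (q⁻¹ ^ (n + 1) - 1) / T) (2 * m + 1) / qPochhammer q (2 * m)) atTop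
      (𝓝 (∏' i : ℕ, (1 + (T - 2) * q ^ (2 * (i + 1)) + q ^ (4 * (i + 1))) *
        (1 + q ^ (i + 1)) / (1 - q ^ (i + 1)))) := by
  obtain ⟨x, hx, hTx⟩ := exists_mul_eq_one_add_sq (T : ℂ)
  have complex_limit := tendsto_continuant_div_qPochhammer_of_mul_eq_sq
    (Complex.ofReal_ne_zero.mpr hq0) (by rwa [Complex.norm_real]) hx
    (Complex.ofReal_ne_zero.mpr hT) hTx
  rw [← tendsto_ofReal_iff]
  convert complex_limit using 2 with m
  · have cast_continuant := map_continuant Complex.ofRealHom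
    simp_all [qPochhammer]
  · exact ((multipliable_one_add_mul_pow_add_pow_mul_div hq (T - 2)).map_tprod Complex.ofRealHom
      Complex.continuous_ofReal).trans (tprod_congr fun i => by simp)

theorem statement10_general (q t : ℝ) (hq0 : 0 < q) (hq1 : q < 1) (ht : t ≠ 0) :
    Multipliable (fun i : ℕ =>
      (1 + (t ^ 2 - 2) * q ^ (2 * (i + 1)) + q ^ (4 * (i + 1))) *
        (1 + q ^ (i + 1)) / (1 - q ^ (i + 1))) ∧
    HasSum (fun ω : Ho => q ^ A'fun ω.1 * t ^ B'fun ω.1) (∏' i : ℕ,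
      (1 + (t ^ 2 - 2) * q ^ (2 * (i + 1)) + q ^ (4 * (i + 1))) *
        (1 + q ^ (i + 1)) / (1 - q ^ (i + 1))) := by
  have hq : ‖q‖ < 1 := by rwa [Real.norm_of_nonneg hq0.le]
  refine ⟨multipliable_one_add_mul_pow_add_pow_mul_div hq _,
    hasSum_of_tendsto_hasSum_indicator (fun ω => ?_) (fun ω => ?_)
      (hasSum_truncatedConfigs hq0 hq1 ht)
      (tendsto_continuant_div_qPochhammer hq0.ne' hq (pow_ne_zero 2 ht))⟩
  · exact mul_nonneg (zpow_nonneg hq0.le _) ((even_two_mul _).zpow_nonneg t)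
  · obtain ⟨N, hN⟩ := ω.2.2
    filter_upwards [eventually_ge_atTop N] with m hm n hn
    exact hN n (by omega)

end PartitionFunction

theorem statement10 (q : ℝ) (hq0 : 0 < q) (hq1 : q < 1) :
    Multipliable (fun i : ℕ =>
      (1 + q ^ (2 * (i + 1))) ^ 2 * (1 + q ^ (i + 1)) / (1 - q ^ (i + 1))) ∧
    Sodd q 2 = ∏' i : ℕ,
      (1 + q ^ (2 * (i + 1))) ^ 2 * (1 + q ^ (i + 1)) / (1 - q ^ (i + 1)) := by
  have factor (i : ℕ) : (1 : ℝ) + (2 ^ 2 - 2) * q ^ (2 * (i + 1)) + q ^ (4 * (i + 1)) =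
      (1 + q ^ (2 * (i + 1))) ^ 2 := by
    ring
  obtain ⟨multipliable, hasSum⟩ := statement10_general q 2 hq0 hq1 two_ne_zero
  simp only [factor] at multipliable hasSum
  exact ⟨multipliable, hasSum.tsum_eq⟩
end

section
/- For all real numbers q, z with 0 < q < 1 and z > 0, one has 2·S_even(q,1)·Σ_{ℓ∈ℤ} q^{ℓ(ℓ+1)} z^{2ℓ} = Π_{i≥1} (1 + q^{i}z + q^{2i}z²)(1 + q^{i−1}z⁻¹ + q^{2(i−1)}z⁻²) + Π_{i≥1} (1 − q^{i}z + q^{2i}z²)(1 − q^{i−1}z⁻¹ + q^{2(i−1)}z⁻²), where the sum over ℓ and the infinite products converge absolutely. -/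
/-!
Read the factor of the first product at `i ∈ ℤ` as `1 + w i + w i ^ 2`, where `w i = q ^ (i + 1) z`
for `i ≥ 0` and `w i = q ^ (-i - 1) z⁻¹` for `i < 0`. Expanding the product gives a sum of
`q ^ energy * z ^ charge` over the states of a system of particles on `ℤ` with at most two particles
per site: relative to the ground state, with two particles at every site `i ≥ 0` and none elsewhere,
the exponent chosen at `i` counts the missing particles if `i ≥ 0` and the additional ones if
`i < 0`. The second product is the first one at `-z`, so adding the two leaves twice the sum over
the states of even charge.

List the particles of a state of charge `2 l` from left to right as `x 0 ≤ x 1 ≤ …`. The gaps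
`ω k = x (k + 1) - x k` have no two consecutive zeros, since no site holds three particles, and
eventually equal `0, 1, 0, 1, …`, so `ω ∈ He`. As `x k = l + k / 2` for large `k`, the pair `(l, ω)`
determines the state, and every pair occurs. The energy is the total displacement of the particles
from their ground-state positions: shifting the ground state by `l` costs `l (l + 1)`, and summation
by parts turns the remaining displacement into `A(ω)`. Hence the sum over the states of even charge
is the theta series times `∑ q ^ A(ω)`.
-/

open scoped BigOperators

namespace TwoExclusion

open Filter

section Expansion

variable {ι R : Type*}

lemma norm_multiset_map_prod_le [SeminormedCommRing R] [NormOneClass R] (w : ι → R)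
    (s : Multiset ι) :
    ‖(s.map w).prod‖ ≤ (s.map fun i => ‖w i‖).prod := by
  induction s using Multiset.induction_on with
  | empty => simp
  | cons i s ih =>
    simp only [Multiset.map_cons, Multiset.prod_cons]
    exact (norm_mul_le _ _).trans (by gcongr)

lemma summable_norm_add_sq [NormedRing R] {w : ι → R}
    (hw : Summable fun i => ‖w i‖) :
    Summable fun i => ‖w i + w i ^ 2‖ := by
  refine (hw.add (hw.mul_left (∑' j, ‖w j‖))).of_nonneg_of_le (fun _ => norm_nonneg _) fun i => ?_
  have hi : ‖w i‖ ≤ ∑' j, ‖w j‖ := hw.le_tsum i fun _ _ => norm_nonneg _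
  calc ‖w i + w i ^ 2‖ ≤ ‖w i‖ + ‖w i ^ 2‖ := norm_add_le _ _
    _ ≤ ‖w i‖ + (∑' j, ‖w j‖) * ‖w i‖ := by
      rw [pow_two]
      gcongr
      exact (norm_mul_le _ _).trans (by gcongr)

variable [DecidableEq ι]

/-- A state of the 2-exclusion process, encoded by the multiset of its deviations from a reference
state: every site deviates at most twice. -/
abbrev State (ι : Type*) [DecidableEq ι] : Type _ := {s : Multiset ι // ∀ i, s.count i ≤ 2}

/-- The state in which the sites of `p.1` deviate, those of the subset `p.2` twice. -/
def stateOfSupport (p : Σ S : Finset ι, S.powerset) : State ι :=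
  ⟨p.1.val + p.2.1.val, fun i => by
    rw [Multiset.count_add]
    exact add_le_add (Multiset.nodup_iff_count_le_one.1 p.1.nodup i)
      (Multiset.nodup_iff_count_le_one.1 p.2.1.nodup i)⟩

lemma count_stateOfSupport (p : Σ S : Finset ι, S.powerset) (i : ι) :
    (stateOfSupport p).1.count i = (if i ∈ p.1 then 1 else 0) + (if i ∈ p.2.1 then 1 else 0) := by
  simp only [stateOfSupport, Multiset.count_add, Multiset.count_eq_of_nodup (Finset.nodup _),
    Finset.mem_val]

lemma stateOfSupport_bijective : Function.Bijective (stateOfSupport (ι := ι)) := by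
  constructor
  · rintro ⟨S, T, hT⟩ ⟨S', T', hT'⟩ h
    have hcount (i : ι) := congrArg (fun s : State ι => s.1.count i) h
    simp only [count_stateOfSupport] at hcount
    rw [Finset.mem_powerset] at hT hT'
    have hS : S = S' := by
      ext i
      grind
    have hT : T = T' := by
      ext i
      grind
    subst hS hT
    rfl
  · intro s
    refine ⟨⟨s.1.toFinset, {i ∈ s.1.toFinset | s.1.count i = 2}, by simp⟩,
      Subtype.ext (Multiset.ext.2 fun i => ?_)⟩
    have hi := s.2 i
    simp only [count_stateOfSupport, Finset.mem_filter, Multiset.mem_toFinset,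
      ← Multiset.one_le_count_iff_mem]
    grind

lemma hasSum_prod_stateOfSupport [CommSemiring R] [TopologicalSpace R] (w : ι → R)
    (S : Finset ι) :
    HasSum (fun T : S.powerset => ((stateOfSupport ⟨S, T⟩).1.map w).prod)
      (∏ i ∈ S, (w i + w i ^ 2)) := by
  convert hasSum_fintype (fun T : S.powerset => ((stateOfSupport ⟨S, T⟩).1.map w).prod) using 1
  calc ∏ i ∈ S, (w i + w i ^ 2)
      = (∏ i ∈ S, w i) * ∏ i ∈ S, (1 + w i) := by
        rw [← Finset.prod_mul_distrib]
        exact Finset.prod_congr rfl fun i _ => by ring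
    _ = ∑ T ∈ S.powerset, (∏ i ∈ S, w i) * ∏ i ∈ T, w i := by
        rw [Finset.prod_one_add, Finset.mul_sum]
    _ = ∑ T : S.powerset, ((stateOfSupport ⟨S, T⟩).1.map w).prod := by
        rw [← Finset.sum_coe_sort]
        simp only [stateOfSupport, Multiset.map_add, Multiset.prod_add, Finset.prod]

variable [NormedCommRing R] [NormOneClass R] [CompleteSpace R]

lemma summable_state_prod {w : ι → R} (hw : Summable fun i => ‖w i‖) :
    Summable fun s : State ι => (s.1.map w).prod := by
  refine Summable.of_norm_bounded (g := fun s : State ι => (s.1.map fun i => ‖w i‖).prod) ?_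
    fun s => norm_multiset_map_prod_le w s.1
  refine (Equiv.ofBijective _ stateOfSupport_bijective).summable_iff.1 <|
    (summable_sigma_of_nonneg fun p => Multiset.prod_nonneg (by simp)).2
      ⟨fun S => (hasSum_prod_stateOfSupport _ S).summable, ?_⟩
  simp only [Equiv.ofBijective_apply,
    fun S => (hasSum_prod_stateOfSupport (fun i => ‖w i‖) S).tsum_eq]
  exact summable_finsetProd_of_summable_norm (summable_norm_add_sq (by simpa using hw))

theorem hasSum_state_prod {w : ι → R} (hw : Summable fun i => ‖w i‖) :
    HasSum (fun s : State ι => (s.1.map w).prod) (∏' i, (1 + (w i + w i ^ 2))) := by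
  have hfinset := summable_finsetProd_of_summable_norm (summable_norm_add_sq hw)
  rw [tprod_one_add hfinset, ← (Equiv.ofBijective _ stateOfSupport_bijective).hasSum_iff]
  exact HasSum.sigma_of_hasSum hfinset.hasSum (hasSum_prod_stateOfSupport w)
    ((Equiv.ofBijective _ stateOfSupport_bijective).summable_iff.2 (summable_state_prod hw))

lemma hasProd_nat_mul_neg_add_one {g : ℤ → R} (hg : Summable fun i => ‖g i‖) :
    HasProd (fun n : ℕ => (1 + g n) * (1 + g (-(n + 1)))) (∏' i, (1 + g i)) := by
  have hnonneg : Multipliable fun n : ℕ => 1 + g n :=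
    multipliable_one_add_of_summable (hg.comp_injective Nat.cast_injective)
  have hneg : Multipliable fun n : ℕ => 1 + g (-(n + 1)) :=
    multipliable_one_add_of_summable
      (hg.comp_injective (i := fun n : ℕ => (-(n + 1) : ℤ)) fun a b h => by simpa using h)
  rw [(HasProd.of_nat_of_neg_add_one (f := fun i => 1 + g i) hnonneg.hasProd
    hneg.hasProd).tprod_eq]
  exact hnonneg.hasProd.mul hneg.hasProd

end Expansion

section Sequences

lemma sum_range_succ_mul_sub {R : Type*} [CommRing R] (d : ℕ → R) (n : ℕ) :
    ∑ k ∈ Finset.range n, ((k : R) + 1) * (d (k + 1) - d k) =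
      n * d n - ∑ k ∈ Finset.range n, d k := by
  induction n with
  | zero => simp
  | succ n ih =>
    rw [Finset.sum_range_succ, Finset.sum_range_succ, ih]
    push_cast
    ring

variable {α : Type*}

lemma eqOn_of_map_range_eq [PartialOrder α] {x y : ℕ → α} (hx : Monotone x) (hy : Monotone y)
    {n : ℕ} (h : (Multiset.range n).map x = (Multiset.range n).map y) : ∀ k < n, x k = y k := by
  have hpairwise {z : ℕ → α} (hz : Monotone z) : ((List.range n).map z).Pairwise (· ≤ ·) :=
    List.pairwise_map.2 (List.pairwise_lt_range.imp fun hij => hz hij.le)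
  have hperm : ((List.range n).map x).Perm ((List.range n).map y) := Multiset.coe_eq_coe.1 h
  have hlist := hperm.eq_of_pairwise (fun _ _ _ _ => le_antisymm) (hpairwise hx) (hpairwise hy)
  intro k hk
  exact List.map_inj_left.1 hlist k (List.mem_range.2 hk)

lemma count_map_range_eq_card [DecidableEq α] (x : ℕ → α) (n : ℕ) (a : α) :
    ((Multiset.range n).map x).count a = (Finset.range n |>.filter (x · = a)).card := by
  simp only [Multiset.count_map, eq_comm (a := a), Finset.card_def, Finset.filter_val,
    Finset.range_val]

lemma count_map_range_le [PartialOrder α] [DecidableEq α] {x : ℕ → α} (hx : Monotone x) {d : ℕ}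
    (hlt : ∀ k, x k < x (k + d)) (n : ℕ) (a : α) : ((Multiset.range n).map x).count a ≤ d := by
  rw [count_map_range_eq_card]
  set K := Finset.range n |>.filter (x · = a)
  rcases K.eq_empty_or_nonempty with hempty | hne
  · simp [hempty]
  · have hsub : K ⊆ Finset.Ico (K.min' hne) (K.min' hne + d) := fun k hk => by
      refine Finset.mem_Ico.2 ⟨K.min'_le k hk, not_le.1 fun hle => ?_⟩
      have hmin : x (K.min' hne) = a := (Finset.mem_filter.1 (K.min'_mem hne)).2
      have hk' : x k = a := (Finset.mem_filter.1 hk).2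
      exact (hlt _).not_ge ((hx hle).trans_eq (hk'.trans hmin.symm))
    simpa using Finset.card_le_card hsub

lemma lt_add_of_count_map_range_le [PartialOrder α] [DecidableEq α] {x : ℕ → α} (hx : Monotone x)
    {d k : ℕ} (hcount : ∀ n a, ((Multiset.range n).map x).count a ≤ d) : x k < x (k + d) := by
  refine (hx (Nat.le_add_right k d)).lt_of_ne fun heq => ?_
  have hsub : Finset.Icc k (k + d) ⊆ (Finset.range (k + d + 1) |>.filter (x · = x k)) :=
    fun j hj => by
      obtain ⟨hkj, hjd⟩ := Finset.mem_Icc.1 hj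
      exact Finset.mem_filter.2 ⟨Finset.mem_range.2 (by omega),
        ((hx hjd).trans_eq heq.symm).antisymm (hx hkj)⟩
  have hcard := (Finset.card_le_card hsub).trans_eq (count_map_range_eq_card x _ _).symm
  have := hcount (k + d + 1) (x k)
  rw [Nat.card_Icc] at hcard
  omega

lemma map_getD_range_length (L : List α) (f : ℕ → α) :
    (List.range L.length).map (fun k => L.getD k (f k)) = L :=
  List.ext_getElem (by simp) fun k _ hk => by simp [hk]

end Sequences

section Particles

/-- The two particles at each of the sites `0 ≤ i < M`: the particles of the ground state at sites
below `M`. -/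
noncomputable def fermiSea (M : ℤ) : Multiset ℤ := 2 • (Finset.Ico 0 M).val

/-- The particles at sites below `M` of the state with deviations `s` from the ground state: a
deviation at a site `i ≥ 0` is a missing particle, one at a site `i < 0` an additional particle. -/
noncomputable def particles (M : ℤ) (s : Multiset ℤ) : Multiset ℤ :=
  (fermiSea M - s) + s.filter (· < 0)

/-- The charge of a deviation at site `i`: a hole counts `1` and a particle `-1`. -/
def siteCharge (i : ℤ) : ℤ := if 0 ≤ i then 1 else -1

/-- The total charge of the deviations `s`. -/
def charge (s : Multiset ℤ) : ℤ := (s.map siteCharge).sum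

/-- The total energy of the deviations `s`, one at site `i` having energy `|i + 1|`. -/
def energy (s : Multiset ℤ) : ℕ := (s.map fun i => (i + 1).natAbs).sum

lemma count_fermiSea (M i : ℤ) : (fermiSea M).count i = if 0 ≤ i ∧ i < M then 2 else 0 := by
  simp [fermiSea, Multiset.count_eq_of_nodup (Finset.nodup _)]

lemma count_particles (M : ℤ) (s : Multiset ℤ) (i : ℤ) :
    (particles M s).count i =
      if 0 ≤ i then (if i < M then 2 else 0) - s.count i else s.count i := by
  simp only [particles, Multiset.count_add, Multiset.count_sub, count_fermiSea,
    Multiset.count_filter]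
  grind

lemma fermiSea_succ {M : ℤ} (hM : 0 ≤ M) : fermiSea (M + 1) = fermiSea M + {M, M} := by
  refine Multiset.ext.2 fun i => ?_
  simp only [count_fermiSea, Multiset.count_add, Multiset.insert_eq_cons, Multiset.count_cons,
    Multiset.count_singleton]
  grind

lemma particles_succ {M : ℤ} (hM : 0 ≤ M) {s : Multiset ℤ} (hs : ∀ i ∈ s, i < M) :
    particles (M + 1) s = particles M s + {M, M} := by
  have hMs : s.count M = 0 := Multiset.count_eq_zero.2 fun h => (hs M h).false
  refine Multiset.ext.2 fun i => ?_
  simp only [count_particles, Multiset.count_add, Multiset.insert_eq_cons, Multiset.count_cons,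
    Multiset.count_singleton]
  grind

lemma lt_of_mem_particles {M : ℤ} {s : Multiset ℤ} (hs : ∀ i ∈ s, i < M) :
    ∀ i ∈ particles M s, i < M := by
  intro i hi
  rcases Multiset.mem_add.1 hi with hsea | hneg
  · have hcount := Multiset.count_pos.2 (Multiset.mem_of_le (Multiset.sub_le_self _ _) hsea)
    rw [count_fermiSea] at hcount
    grind
  · exact hs i (Multiset.mem_of_mem_filter hneg)

lemma count_particles_le_two (M : ℤ) (s : State ℤ) (i : ℤ) : (particles M s.1).count i ≤ 2 := by
  have hi := s.2 i
  rw [count_particles]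
  grind

lemma particles_particles {M : ℤ} {s : State ℤ} (hs : ∀ i ∈ s.1, i < M) :
    particles M (particles M s.1) = s.1 := by
  refine Multiset.ext.2 fun i => ?_
  have htwo := s.2 i
  have hM : M ≤ i → s.1.count i = 0 := fun hi =>
    Multiset.count_eq_zero.2 fun h => (hs i h).not_ge hi
  simp only [count_particles]
  grind

lemma particles_add_filter_nonneg {M : ℤ} {s : State ℤ} (hs : ∀ i ∈ s.1, i < M) :
    particles M s.1 + s.1.filter (0 ≤ ·) = fermiSea M + s.1.filter (· < 0) := by
  refine Multiset.ext.2 fun i => ?_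
  have htwo := s.2 i
  have hM : M ≤ i → s.1.count i = 0 := fun hi =>
    Multiset.count_eq_zero.2 fun h => (hs i h).not_ge hi
  simp only [Multiset.count_add, count_particles, count_fermiSea, Multiset.count_filter]
  grind

/-- Charge and energy are the cases `f i = 1` and `f i = i + 1`. -/
lemma sum_siteCharge_mul {M : ℤ} {s : State ℤ} (hs : ∀ i ∈ s.1, i < M) (f : ℤ → ℤ) :
    (s.1.map fun i => siteCharge i * f i).sum =
      ((fermiSea M).map f).sum - ((particles M s.1).map f).sum := by
  have hsplit (t : Multiset ℤ) : (t.map fun i => siteCharge i * f i).sum =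
      ((t.filter (0 ≤ ·)).map f).sum - ((t.filter (· < 0)).map f).sum := by
    induction t using Multiset.induction_on with
    | empty => simp
    | cons i t ih =>
      rcases le_or_gt 0 i with hi | hi
      · have hcharge : siteCharge i = 1 := if_pos hi
        simp only [Multiset.map_cons, Multiset.sum_cons, ih, hcharge, one_mul, hi, hi.not_gt,
          not_false_eq_true, Multiset.filter_cons_of_pos, Multiset.filter_cons_of_neg]
        ring
      · have hcharge : siteCharge i = -1 := if_neg hi.not_ge
        simp only [Multiset.map_cons, Multiset.sum_cons, ih, hcharge, neg_one_mul, hi, hi.not_ge,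
          not_false_eq_true, Multiset.filter_cons_of_pos, Multiset.filter_cons_of_neg]
        ring
  have hbalance := congrArg (fun t => (t.map f).sum) (particles_add_filter_nonneg hs)
  simp only [Multiset.map_add, Multiset.sum_add] at hbalance
  rw [hsplit]
  omega

lemma charge_eq_card_sub_card {M : ℤ} {s : State ℤ} (hs : ∀ i ∈ s.1, i < M) :
    charge s.1 = (fermiSea M).card - (particles M s.1).card := by
  simpa [charge] using sum_siteCharge_mul hs fun _ => 1

lemma energy_eq_sum_sub_sum {M : ℤ} {s : State ℤ} (hs : ∀ i ∈ s.1, i < M) :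
    (energy s.1 : ℤ) =
      ((fermiSea M).map (· + 1)).sum - ((particles M s.1).map (· + 1)).sum := by
  rw [← sum_siteCharge_mul hs, energy, Nat.cast_multiset_sum, Multiset.map_map]
  refine congrArg Multiset.sum (Multiset.map_congr rfl fun i _ => ?_)
  simp only [Function.comp_apply, siteCharge]
  split_ifs <;> omega

lemma card_fermiSea {M : ℤ} (hM : 0 ≤ M) : ((fermiSea M).card : ℤ) = 2 * M := by
  simp [fermiSea, hM]

lemma sum_fermiSea {M : ℤ} (hM : 0 ≤ M) : ((fermiSea M).map (· + 1)).sum = M * (M + 1) := by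
  induction M, hM using Int.leInduction with
  | base => simp [fermiSea]
  | succ M hM ih =>
    rw [fermiSea_succ hM, Multiset.map_add, Multiset.sum_add, ih]
    simp only [Multiset.insert_eq_cons, Multiset.map_cons, Multiset.map_singleton,
      Multiset.sum_cons, Multiset.sum_singleton]
    ring

lemma even_charge_iff (s : Multiset ℤ) : Even (charge s) ↔ Even s.card := by
  induction s using Multiset.induction_on with
  | empty => simp [charge]
  | cons i s ih =>
    have hi : Odd (siteCharge i) := by
      unfold siteCharge
      split_ifs <;> decide
    rw [charge] at ih ⊢
    rw [Multiset.map_cons, Multiset.sum_cons, Multiset.card_cons, Int.even_add, Nat.even_add_one,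
      ih]
    simp [Int.not_even_iff_odd.2 hi]

lemma eventually_forall_mem_lt (s : Multiset ℤ) (l : ℤ) :
    ∀ᶠ n : ℕ in atTop, 0 ≤ n + l ∧ ∀ i ∈ s, i < n + l := by
  obtain ⟨b, hb⟩ := s.toFinset.bddAbove
  filter_upwards [eventually_ge_atTop (b.natAbs + l.natAbs + 1)] with n hn
  refine ⟨by omega, fun i hi => ?_⟩
  have := hb (Multiset.mem_toFinset.2 hi)
  omega

end Particles

section Positions

/-- The sequences listing the particles of a state from left to right when the state has charge
`2 * l`: at most two particles share a site, and far to the right the `k`-th particle sits at its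
ground-state position `k / 2` translated by `l`. -/
structure IsPositionSeq (l : ℤ) (x : ℕ → ℤ) : Prop where
  monotone : Monotone x
  lt_add_two : ∀ k, x k < x (k + 2)
  eventually_eq : ∀ᶠ k in atTop, x k = l + (k / 2 : ℕ)

/-- The sequence `x` lists the particles of the state with deviations `s`. The first `2 * n`
particles are compared with those at sites below `n + l`, which assumes that `s` has charge
`2 * l`. -/
def Enumerates (l : ℤ) (x : ℕ → ℤ) (s : Multiset ℤ) : Prop :=
  ∀ᶠ n : ℕ in atTop, (Multiset.range (2 * n)).map x = particles (n + l) s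

lemma enumerates_of_map_range_eq {l : ℤ} {x : ℕ → ℤ} {s : Multiset ℤ} {n₀ : ℕ}
    (htail : ∀ k ≥ 2 * n₀, x k = l + (k / 2 : ℕ)) (hn₀ : 0 ≤ n₀ + l) (hs : ∀ i ∈ s, i < n₀ + l)
    (h : (Multiset.range (2 * n₀)).map x = particles (n₀ + l) s) : Enumerates l x s := by
  filter_upwards [eventually_ge_atTop n₀] with n hn
  induction n, hn using Nat.le_induction with
  | base => exact h
  | succ n hn ih =>
    have hsucc : ((n + 1 : ℕ) : ℤ) + l = n + l + 1 := by
      push_cast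
      ring
    have heven : x (2 * n) = n + l := by
      rw [htail _ (by omega)]
      omega
    have hodd : x (2 * n + 1) = n + l := by
      rw [htail _ (by omega)]
      omega
    rw [hsucc, particles_succ (by omega) fun i hi => (hs i hi).trans_le (by omega), ← ih,
      show 2 * (n + 1) = (2 * n + 1).succ from rfl, Multiset.range_succ, Multiset.range_succ,
      Multiset.map_cons, Multiset.map_cons, heven, hodd, add_comm (Multiset.map x _),
      Multiset.insert_eq_cons, Multiset.cons_add, Multiset.singleton_add]

lemma IsPositionSeq.exists_enumerates {l : ℤ} {x : ℕ → ℤ} (hx : IsPositionSeq l x) :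
    ∃ s : State ℤ, Enumerates l x s.1 := by
  obtain ⟨N, hN⟩ := eventually_atTop.1 hx.eventually_eq
  set n := N + l.natAbs
  let P : State ℤ :=
    ⟨(Multiset.range (2 * n)).map x, count_map_range_le hx.monotone hx.lt_add_two _⟩
  have hP : ∀ i ∈ P.1, i < n + l := by
    intro i hi
    obtain ⟨k, hk, rfl⟩ : ∃ k ∈ Multiset.range (2 * n), x k = i := Multiset.mem_map.1 hi
    have hk : k < 2 * n := Multiset.mem_range.1 hk
    have hlast := hx.monotone (show k ≤ 2 * n - 1 by omega)
    rw [hN (2 * n - 1) (by omega)] at hlast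
    omega
  exact ⟨⟨particles (n + l) P.1, count_particles_le_two _ P⟩,
    enumerates_of_map_range_eq (fun k hk => hN k (by omega)) (by omega) (lt_of_mem_particles hP)
      (particles_particles hP).symm⟩

lemma monotone_getD_add_div_two {l : ℤ} {n : ℕ} {L : List ℤ} (hlength : L.length = 2 * n)
    (hsorted : L.Pairwise (· ≤ ·)) (hlt : ∀ i ∈ L, i < n + l) :
    Monotone fun k => L.getD k (l + (k / 2 : ℕ)) := by
  refine monotone_nat_of_le_succ fun k => ?_
  rcases lt_trichotomy (k + 1) L.length with hk | hk | hk
  · simp only [List.getD_eq_getElem _ _ hk, List.getD_eq_getElem _ _ (Nat.lt_of_succ_lt hk)]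
    exact List.pairwise_iff_getElem.1 hsorted _ _ _ _ k.lt_succ_self
  · rw [List.getD_eq_getElem _ _ (by omega), List.getD_eq_default _ _ hk.ge]
    have := hlt _ (L.getElem_mem (show k < L.length by omega))
    omega
  · rw [List.getD_eq_default _ _ (by omega), List.getD_eq_default _ _ (by omega)]
    omega

lemma exists_isPositionSeq_enumerates {l : ℤ} {s : State ℤ} (hs : charge s.1 = 2 * l) :
    ∃ x, IsPositionSeq l x ∧ Enumerates l x s.1 := by
  obtain ⟨n, hn, hlt⟩ := (eventually_forall_mem_lt s.1 l).exists
  set L := (particles (n + l) s.1).sort (· ≤ ·)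
  have hL : (L : Multiset ℤ) = particles (n + l) s.1 := Multiset.sort_eq _ _
  have hlength : L.length = 2 * n := by
    have hcharge := charge_eq_card_sub_card hlt
    rw [hs, card_fermiSea hn, ← hL, Multiset.coe_card] at hcharge
    omega
  set x : ℕ → ℤ := fun k => L.getD k (l + (k / 2 : ℕ))
  have htail : ∀ k ≥ 2 * n, x k = l + (k / 2 : ℕ) := fun k hk =>
    List.getD_eq_default _ _ (hlength.trans_le hk)
  have hmono : Monotone x :=
    monotone_getD_add_div_two hlength (Multiset.pairwise_sort _ _) fun i hi =>
      lt_of_mem_particles hlt i ((Multiset.mem_sort _).1 hi)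
  have henum : Enumerates l x s.1 := by
    refine enumerates_of_map_range_eq htail hn hlt ?_
    rw [← hL, ← hlength, ← Multiset.coe_range, Multiset.map_coe, map_getD_range_length]
  refine ⟨x, ⟨hmono, fun k => lt_add_of_count_map_range_le hmono fun m i => ?_,
    eventually_atTop.2 ⟨_, htail⟩⟩, henum⟩
  obtain ⟨n', hn', hm⟩ := (henum.and (eventually_ge_atTop m)).exists
  calc ((Multiset.range m).map x).count i ≤ ((Multiset.range (2 * n')).map x).count i :=
        Multiset.count_le_of_le i (Multiset.map_le_map (Multiset.range_le.2 (by omega)))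
    _ ≤ 2 := by
        rw [hn']
        exact count_particles_le_two _ s i

lemma Enumerates.state_unique {l : ℤ} {x : ℕ → ℤ} {s s' : State ℤ} (h : Enumerates l x s.1)
    (h' : Enumerates l x s'.1) : s = s' := by
  obtain ⟨n, hn, hn', ⟨-, hlt⟩, -, hlt'⟩ := (h.and (h'.and
    ((eventually_forall_mem_lt s.1 l).and (eventually_forall_mem_lt s'.1 l)))).exists
  rw [← Subtype.coe_inj, ← particles_particles hlt, ← hn, hn', particles_particles hlt']

lemma Enumerates.seq_unique {l : ℤ} {x x' : ℕ → ℤ} {s : Multiset ℤ} (hx : Monotone x)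
    (hx' : Monotone x') (h : Enumerates l x s) (h' : Enumerates l x' s) : x = x' := by
  funext k
  obtain ⟨n, ⟨hn, hn'⟩, hk⟩ := ((h.and h').and (eventually_gt_atTop k)).exists
  exact eqOn_of_map_range_eq hx hx' (hn.trans hn'.symm) k (by omega)

lemma Enumerates.charge_eq {l : ℤ} {x : ℕ → ℤ} {s : State ℤ} (h : Enumerates l x s.1) :
    charge s.1 = 2 * l := by
  obtain ⟨n, hn, hnonneg, hlt⟩ := (h.and (eventually_forall_mem_lt s.1 l)).exists
  rw [charge_eq_card_sub_card hlt, card_fermiSea hnonneg, ← hn, Multiset.card_map,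
    Multiset.card_range]
  push_cast
  ring

lemma sum_range_two_mul_div_two (n : ℕ) :
    ∑ k ∈ Finset.range (2 * n), ((k / 2 : ℕ) : ℤ) = n * (n - 1) := by
  induction n with
  | zero => simp
  | succ n ih =>
    rw [show 2 * (n + 1) = 2 * n + 1 + 1 by ring, Finset.sum_range_succ, Finset.sum_range_succ, ih,
      show 2 * n / 2 = n by omega, show (2 * n + 1) / 2 = n by omega]
    push_cast
    ring

lemma Enumerates.eventually_energy_eq {l : ℤ} {x : ℕ → ℤ} {s : State ℤ}
    (h : Enumerates l x s.1) : ∀ᶠ n : ℕ in atTop, (energy s.1 : ℤ) =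
      l * (l + 1) + ∑ k ∈ Finset.range (2 * n), (l + (k / 2 : ℕ) - x k) := by
  filter_upwards [h, eventually_forall_mem_lt s.1 l] with n hn ⟨hnonneg, hlt⟩
  have hparticles : ((particles (n + l) s.1).map (· + 1)).sum =
      ∑ k ∈ Finset.range (2 * n), (x k + 1) := by
    rw [← hn, Multiset.map_map]
    rfl
  rw [energy_eq_sum_sub_sum hlt, sum_fermiSea hnonneg, hparticles, Finset.sum_sub_distrib,
    Finset.sum_add_distrib, Finset.sum_add_distrib, sum_range_two_mul_div_two]
  simp only [Finset.sum_const, Finset.card_range, nsmul_eq_mul]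
  push_cast
  ring

end Positions

section Gaps

lemma eventually_finsum_eq_sum_range {M : Type*} [AddCommMonoid M] {f : ℕ → M}
    (hf : ∀ᶠ n in atTop, f n = 0) :
    ∀ᶠ N in atTop, ∑ᶠ n, f n = ∑ n ∈ Finset.range N, f n := by
  obtain ⟨N₀, hN₀⟩ := eventually_atTop.1 hf
  filter_upwards [eventually_ge_atTop N₀] with N hN
  refine finsum_eq_sum_of_support_subset f fun n hn => ?_
  rw [Finset.coe_range, Set.mem_Iio]
  exact not_le.1 fun hle => hn (hN₀ n (hN.trans hle))

lemma sum_range_mod_two (n : ℕ) : ∑ k ∈ Finset.range n, k % 2 = n / 2 := by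
  induction n with
  | zero => rfl
  | succ n ih =>
    rw [Finset.sum_range_succ, ih]
    omega

/-- The position of the `k`-th particle, from left to right, of the state of charge `2 * l` with
gaps `ω`. The first particle is placed so that far particles sit at `l + k / 2`. -/
noncomputable def position (l : ℤ) (ω : ℕ → ℕ) (k : ℕ) : ℤ :=
  l - ∑ᶠ j, ((ω j : ℤ) - (j % 2 : ℕ)) + ∑ j ∈ Finset.range k, (ω j : ℤ)

lemma position_succ (l : ℤ) (ω : ℕ → ℕ) (k : ℕ) :
    position l ω (k + 1) = position l ω k + ω k := by
  rw [position, position, Finset.sum_range_succ, add_assoc]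

lemma monotone_position (l : ℤ) (ω : ℕ → ℕ) : Monotone (position l ω) :=
  monotone_nat_of_le_succ fun k => by
    rw [position_succ]
    omega

lemma eventually_gap_eq {ω : ℕ → ℕ} (hω : ω ∈ He) :
    ∀ᶠ n in atTop, (ω n : ℤ) - (n % 2 : ℕ) = 0 := by
  obtain ⟨N, hN⟩ := hω.2
  filter_upwards [eventually_ge_atTop N] with n hn
  have := hN n hn
  grind

lemma eventually_position_eq (l : ℤ) {ω : ℕ → ℕ} (hω : ω ∈ He) :
    ∀ᶠ k in atTop, position l ω k = l + (k / 2 : ℕ) := by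
  filter_upwards [eventually_finsum_eq_sum_range (eventually_gap_eq hω)] with k hk
  rw [position, hk, Finset.sum_sub_distrib, ← sum_range_mod_two]
  push_cast
  ring

lemma isPositionSeq_position (l : ℤ) {ω : ℕ → ℕ} (hω : ω ∈ He) :
    IsPositionSeq l (position l ω) where
  monotone := monotone_position l ω
  lt_add_two k := by
    have := hω.1 k
    rw [position_succ, position_succ]
    omega
  eventually_eq := eventually_position_eq l hω

lemma position_injective (l : ℤ) : Function.Injective (position l) := by
  intro ω ω' h
  funext k
  have hk := congrFun h k
  have hk' := congrFun h (k + 1)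
  rw [position_succ, position_succ] at hk'
  omega

lemma IsPositionSeq.exists_position_eq {l : ℤ} {x : ℕ → ℤ} (hx : IsPositionSeq l x) :
    ∃ ω ∈ He, position l ω = x := by
  choose ω hgap using fun k => Int.le.dest (hx.monotone (Nat.le_add_right k 1))
  replace hgap (k : ℕ) : x (k + 1) = x k + ω k := (hgap k).symm
  have hω : ω ∈ He := by
    refine ⟨fun k => ?_, ?_⟩
    · have := hx.lt_add_two k
      rw [hgap, hgap] at this
      omega
    · obtain ⟨N, hN⟩ := eventually_atTop.1 hx.eventually_eq
      refine ⟨N, fun n hn => ?_⟩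
      have := hgap n
      rw [hN n hn, hN (n + 1) (by omega)] at this
      split_ifs <;> omega
  have hdiff (k : ℕ) : position l ω k - x k = position l ω 0 - x 0 := by
    induction k with
    | zero => rfl
    | succ k ih =>
      rw [position_succ, hgap, ← ih]
      ring
  obtain ⟨N, hposition, htail⟩ := ((eventually_position_eq l hω).and hx.eventually_eq).exists
  refine ⟨ω, hω, funext fun k => ?_⟩
  have := hdiff k
  have := hdiff N
  omega

lemma Afun_eq_finsum (ω : ℕ → ℕ) :
    Afun ω = ∑ᶠ n : ℕ, ((n : ℤ) + 1) * ((ω n : ℤ) - (n % 2 : ℕ)) := by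
  refine finsum_congr fun n => ?_
  rcases Nat.mod_two_eq_zero_or_one n with hn | hn <;> simp [hn, Nat.add_mod]

/-- Summation by parts: `ω k - k % 2` is the increment of the displacement of the `k`-th particle
from `l + k / 2`. -/
lemma eventually_Afun_eq_sum (l : ℤ) {ω : ℕ → ℕ} (hω : ω ∈ He) :
    ∀ᶠ N in atTop, Afun ω = ∑ k ∈ Finset.range N, (l + (k / 2 : ℕ) - position l ω k) := by
  have hzero : ∀ᶠ n : ℕ in atTop, ((n : ℤ) + 1) * ((ω n : ℤ) - (n % 2 : ℕ)) = 0 :=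
    (eventually_gap_eq hω).mono fun n hn => by rw [hn, mul_zero]
  filter_upwards [eventually_finsum_eq_sum_range hzero, eventually_position_eq l hω] with N hN hlast
  set d : ℕ → ℤ := fun k => position l ω k - (l + (k / 2 : ℕ)) with hd
  have hincrement (k : ℕ) : (ω k : ℤ) - (k % 2 : ℕ) = d (k + 1) - d k := by
    simp only [hd, position_succ]
    omega
  calc Afun ω = ∑ k ∈ Finset.range N, ((k : ℤ) + 1) * (d (k + 1) - d k) := by
        rw [Afun_eq_finsum, hN]
        simp only [hincrement]
    _ = ∑ k ∈ Finset.range N, (l + (k / 2 : ℕ) - position l ω k) := by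
        rw [sum_range_succ_mul_sub, show d N = 0 from sub_eq_zero.2 hlast, mul_zero, zero_sub,
          ← Finset.sum_neg_distrib]
        simp only [hd, neg_sub]

lemma Enumerates.energy_eq {l : ℤ} {ω : ℕ → ℕ} {s : State ℤ} (hω : ω ∈ He)
    (h : Enumerates l (position l ω) s.1) : (energy s.1 : ℤ) = l * (l + 1) + Afun ω := by
  have hdouble : Tendsto (fun n : ℕ => 2 * n) atTop atTop :=
    tendsto_id.const_mul_atTop' two_pos
  obtain ⟨n, henergy, hA⟩ :=
    (h.eventually_energy_eq.and (hdouble.eventually (eventually_Afun_eq_sum l hω))).exists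
  rw [henergy, hA]

lemma Afun_nonneg {ω : ℕ → ℕ} (hω : ω ∈ He) : 0 ≤ Afun ω := by
  obtain ⟨s, hs⟩ := (isPositionSeq_position 0 hω).exists_enumerates
  have := hs.energy_eq hω
  omega

lemma exists_state_parametrization : ∃ Φ : ℤ × He → State ℤ, Function.Injective Φ ∧
    (∀ s, Even s.1.card → s ∈ Set.range Φ) ∧
    ∀ y, charge (Φ y).1 = 2 * y.1 ∧
      (energy (Φ y).1 : ℤ) = y.1 * (y.1 + 1) + Afun y.2.1 := by
  choose Φ hΦ using fun y : ℤ × He => (isPositionSeq_position y.1 y.2.2).exists_enumerates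
  refine ⟨Φ, ?_, fun s hs => ?_, fun y => ⟨(hΦ y).charge_eq, (hΦ y).energy_eq y.2.2⟩⟩
  · rintro ⟨l, ω⟩ ⟨l', ω'⟩ heq
    have h := hΦ (l, ω)
    have h' := hΦ (l', ω')
    rw [heq] at h
    obtain rfl : l = l' := by
      have := h.charge_eq.symm.trans h'.charge_eq
      omega
    have hω := h.seq_unique (monotone_position l ω) (monotone_position l ω') h'
    exact Prod.ext rfl (Subtype.ext (position_injective l hω))
  · obtain ⟨l, hl⟩ := even_iff_two_dvd.1 ((even_charge_iff s.1).2 hs)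
    obtain ⟨x, hx, henum⟩ := exists_isPositionSeq_enumerates hl
    obtain ⟨ω, hω, rfl⟩ := hx.exists_position_eq
    exact ⟨(l, ⟨ω, hω⟩), (hΦ _).state_unique henum⟩

end Gaps

section Weights

variable {𝕜 : Type*}

section Algebra

variable [Field 𝕜]

/-- The weight of a deviation at site `i`: charge is counted by `z` and energy by `q`. -/
def siteWeight (q z : 𝕜) (i : ℤ) : 𝕜 := q ^ (i + 1).natAbs * z ^ siteCharge i

lemma siteWeight_natCast (q z : 𝕜) (n : ℕ) : siteWeight q z n = q ^ (n + 1) * z := by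
  simp [siteWeight, siteCharge, show ((n : ℤ) + 1).natAbs = n + 1 from rfl]

lemma siteWeight_neg_add_one (q z : 𝕜) (n : ℕ) : siteWeight q z (-(n + 1)) = q ^ n * z⁻¹ := by
  have hneg : ¬(0 : ℤ) ≤ -(n + 1) := by omega
  have habs : (-((n : ℤ) + 1) + 1).natAbs = n := by omega
  rw [siteWeight, siteCharge, if_neg hneg, habs, zpow_neg_one]

lemma siteWeight_neg (q z : 𝕜) (i : ℤ) : siteWeight q (-z) i = -siteWeight q z i := by
  unfold siteWeight siteCharge
  split_ifs <;> simp [inv_neg]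

lemma prod_map_siteWeight (q : 𝕜) {z : 𝕜} (hz : z ≠ 0) (s : Multiset ℤ) :
    (s.map (siteWeight q z)).prod = q ^ energy s * z ^ charge s := by
  induction s using Multiset.induction_on with
  | empty => simp [energy, charge]
  | cons i s ih =>
    rw [Multiset.map_cons, Multiset.prod_cons, ih, siteWeight, mul_mul_mul_comm, ← pow_add,
      ← zpow_add₀ hz]
    simp only [energy, charge, Multiset.map_cons, Multiset.sum_cons]

/-- Nonnegativity of the exponents lets the power split also when `q = 0`. -/
lemma prod_map_siteWeight_eq_mul_zpow_Afun (q : 𝕜) {z : 𝕜} (hz : z ≠ 0) {s : Multiset ℤ}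
    {l : ℤ} {ω : ℕ → ℕ} (hω : ω ∈ He) (hcharge : charge s = 2 * l)
    (henergy : (energy s : ℤ) = l * (l + 1) + Afun ω) :
    (s.map (siteWeight q z)).prod = q ^ (l * (l + 1)) * z ^ (2 * l) * q ^ Afun ω := by
  have hl : 0 ≤ l * (l + 1) := by
    rcases le_or_gt 0 l with h | h <;> nlinarith
  have hA := Afun_nonneg hω
  rw [prod_map_siteWeight q hz, hcharge, ← zpow_natCast, henergy, zpow_add' (by omega)]
  ring

end Algebra

variable [NormedField 𝕜]

lemma summable_norm_siteWeight {q : 𝕜} (hq : ‖q‖ < 1) (z : 𝕜) :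
    Summable fun i => ‖siteWeight q z i‖ := by
  have hgeometric : Summable fun n : ℕ => ‖q‖ ^ n :=
    summable_geometric_of_lt_one (norm_nonneg q) hq
  refine Summable.of_nat_of_neg_add_one ?_ ?_
  · simp only [siteWeight_natCast, norm_mul, norm_pow]
    exact ((summable_nat_add_iff 1).2 hgeometric).mul_right _
  · simp only [siteWeight_neg_add_one, norm_mul, norm_pow]
    exact hgeometric.mul_right _

variable [CompleteSpace 𝕜] {q z : 𝕜}

lemma summable_theta_mul_gaps (hq : ‖q‖ < 1) (hz : z ≠ 0) :
    Summable fun y : ℤ × He => q ^ (y.1 * (y.1 + 1)) * z ^ (2 * y.1) * q ^ Afun y.2.1 := by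
  obtain ⟨Φ, hΦ, -, hstat⟩ := exists_state_parametrization
  refine ((summable_state_prod (summable_norm_siteWeight hq z)).comp_injective hΦ).congr fun y => ?_
  exact prod_map_siteWeight_eq_mul_zpow_Afun q hz y.2.2 (hstat y).1 (hstat y).2

/-- Adding the expansion at `-z` cancels the states of odd charge. -/
lemma hasSum_two_mul_theta_mul_gaps (hq : ‖q‖ < 1) (hz : z ≠ 0) :
    HasSum (fun y : ℤ × He => 2 * (q ^ (y.1 * (y.1 + 1)) * z ^ (2 * y.1) * q ^ Afun y.2.1))
      ((∏' i, (1 + (siteWeight q z i + siteWeight q z i ^ 2))) +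
        ∏' i, (1 + (siteWeight q (-z) i + siteWeight q (-z) i ^ 2))) := by
  obtain ⟨Φ, hΦ, hrange, hstat⟩ := exists_state_parametrization
  have hadd := (hasSum_state_prod (summable_norm_siteWeight hq z)).add
    (hasSum_state_prod (summable_norm_siteWeight hq (-z)))
  have hsign (s : State ℤ) : (s.1.map (siteWeight q (-z))).prod =
      (-1) ^ s.1.card * (s.1.map (siteWeight q z)).prod := by
    rw [← Multiset.card_map (siteWeight q z), ← Multiset.prod_map_neg, Multiset.map_map]
    exact congrArg Multiset.prod (Multiset.map_congr rfl fun i _ => siteWeight_neg q z i)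
  rw [← hΦ.hasSum_iff] at hadd
  · convert hadd using 2 with y
    obtain ⟨hcharge, henergy⟩ := hstat y
    have heven : Even (Φ y).1.card := (even_charge_iff _).1 (hcharge ▸ even_two_mul _)
    rw [Function.comp_apply, hsign, heven.neg_one_pow, one_mul, ← two_mul,
      prod_map_siteWeight_eq_mul_zpow_Afun q hz y.2.2 hcharge henergy]
  · intro s hs
    have hodd : Odd s.1.card := Nat.not_even_iff_odd.1 fun h => hs (hrange s h)
    rw [hsign, hodd.neg_one_pow]
    ring

lemma hasProd_siteWeight (hq : ‖q‖ < 1) (z : 𝕜) :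
    HasProd (fun i : ℕ => (1 + q ^ (i + 1) * z + q ^ (2 * (i + 1)) * z ^ 2) *
        (1 + q ^ i * z⁻¹ + q ^ (2 * i) * z⁻¹ ^ 2))
      (∏' i, (1 + (siteWeight q z i + siteWeight q z i ^ 2))) := by
  convert hasProd_nat_mul_neg_add_one
    (summable_norm_add_sq (summable_norm_siteWeight hq z)) using 2 with i
  rw [siteWeight_natCast, siteWeight_neg_add_one]
  ring

lemma summable_theta (hq : ‖q‖ < 1) (hz : z ≠ 0) :
    Summable fun l : ℤ => q ^ (l * (l + 1)) * z ^ (2 * l) := by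
  let ground : He := ⟨fun n => if (n + 1) % 2 = 0 then 1 else 0,
    fun n => by grind, 0, fun _ _ => rfl⟩
  have hground : Afun ground.1 = 0 := by
    rw [Afun_eq_finsum]
    refine finsum_eq_zero_of_forall_eq_zero fun n => ?_
    rcases Nat.mod_two_eq_zero_or_one n with hn | hn <;> simp [ground, hn, Nat.add_mod]
  refine ((summable_theta_mul_gaps hq hz).comp_injective
    (Prod.mk_left_injective ground)).congr fun l => ?_
  simp [hground]

end Weights

end TwoExclusion

open TwoExclusion in
theorem statement11_general {𝕜 : Type*} [NormedField 𝕜] [CompleteSpace 𝕜] (q z : 𝕜)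
    (hq : ‖q‖ < 1) (hz : z ≠ 0) :
    Summable (fun ℓ : ℤ => q ^ (ℓ * (ℓ + 1)) * z ^ (2 * ℓ)) ∧
    Multipliable (fun i : ℕ =>
      (1 + q ^ (i + 1) * z + q ^ (2 * (i + 1)) * z ^ 2) *
      (1 + q ^ i * z⁻¹ + q ^ (2 * i) * z⁻¹ ^ 2)) ∧
    Multipliable (fun i : ℕ =>
      (1 - q ^ (i + 1) * z + q ^ (2 * (i + 1)) * z ^ 2) *
      (1 - q ^ i * z⁻¹ + q ^ (2 * i) * z⁻¹ ^ 2)) ∧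
    2 * (∑' ω : He, q ^ Afun ω.1) * (∑' ℓ : ℤ, q ^ (ℓ * (ℓ + 1)) * z ^ (2 * ℓ)) =
      (∏' i : ℕ, (1 + q ^ (i + 1) * z + q ^ (2 * (i + 1)) * z ^ 2) *
        (1 + q ^ i * z⁻¹ + q ^ (2 * i) * z⁻¹ ^ 2)) +
      (∏' i : ℕ, (1 - q ^ (i + 1) * z + q ^ (2 * (i + 1)) * z ^ 2) *
        (1 - q ^ i * z⁻¹ + q ^ (2 * i) * z⁻¹ ^ 2)) := by
  have hplus := hasProd_siteWeight hq z
  have hminus := hasProd_siteWeight hq (-z)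
  simp only [inv_neg, mul_neg, even_two.neg_pow, ← sub_eq_add_neg] at hminus
  refine ⟨summable_theta hq hz, hplus.multipliable, hminus.multipliable, ?_⟩
  rw [hplus.tprod_eq, hminus.tprod_eq, ← (hasSum_two_mul_theta_mul_gaps hq hz).tsum_eq,
    tsum_mul_left, (summable_theta_mul_gaps hq hz).tsum_prod]
  simp only [tsum_mul_left, tsum_mul_right]
  ring

theorem statement11 (q z : ℝ) (hq0 : 0 < q) (hq1 : q < 1) (hz : 0 < z) :
    Summable (fun ℓ : ℤ => q ^ (ℓ * (ℓ + 1)) * z ^ (2 * ℓ)) ∧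
    Multipliable (fun i : ℕ =>
      (1 + q ^ (i + 1) * z + q ^ (2 * (i + 1)) * z ^ 2) *
      (1 + q ^ i * z⁻¹ + q ^ (2 * i) * z⁻¹ ^ 2)) ∧
    Multipliable (fun i : ℕ =>
      (1 - q ^ (i + 1) * z + q ^ (2 * (i + 1)) * z ^ 2) *
      (1 - q ^ i * z⁻¹ + q ^ (2 * i) * z⁻¹ ^ 2)) ∧
    2 * Seven q 1 * (∑' ℓ : ℤ, q ^ (ℓ * (ℓ + 1)) * z ^ (2 * ℓ)) =
      (∏' i : ℕ, (1 + q ^ (i + 1) * z + q ^ (2 * (i + 1)) * z ^ 2) *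
        (1 + q ^ i * z⁻¹ + q ^ (2 * i) * z⁻¹ ^ 2)) +
      (∏' i : ℕ, (1 - q ^ (i + 1) * z + q ^ (2 * (i + 1)) * z ^ 2) *
        (1 - q ^ i * z⁻¹ + q ^ (2 * i) * z⁻¹ ^ 2)) := by
  simpa [Seven] using statement11_general q z (by rwa [Real.norm_of_nonneg hq0.le]) hz.ne'
end

section
/- For all real numbers q, z with 0 < q < 1 and z > 0, one has 2·S_odd(q,1)·Σ_{ℓ∈ℤ} q^{(ℓ+1)²} z^{2ℓ+1} = Π_{i≥1} (1 + q^{i}z + q^{2i}z²)(1 + q^{i−1}z⁻¹ + q^{2(i−1)}z⁻²) − Π_{i≥1} (1 − q^{i}z + q^{2i}z²)(1 − q^{i−1}z⁻¹ + q^{2(i−1)}z⁻²), where the sum over ℓ and the infinite products converge absolutely. -/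
open scoped BigOperators

/-!
Let `F(z) = ∏ (1 + t q^i z + q^(2i) z²) (1 + t q^(i-1) z⁻¹ + q^(2(i-1)) z⁻²)`. Up to a monomial, a
finite truncation of `F(z)` is the generating function of configurations of particles on a box of
sites, at most two per site, graded by energy, number of singly occupied sites and charge; in
`F(z) - F(-z)` only the odd charges `2ℓ + 1` survive, each twice. A configuration is determined by
its charge and by the sequence `ω` of gaps between consecutive particles, read from the top.
Translations do not change the gaps, and for odd charge `ω` runs through `Ho`. The energy is
`A'(ω) + (ℓ + 1)²` and the number of singly occupied sites is `B'(ω) + 1`, so the sum over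
configurations factors into the two series. Every pair `(ℓ, ω)` occurs in all large boxes, and for
non-negative parameters the convergence of the truncated products bounds the partial sums of the
double series, which yields absolute convergence in general.
-/

namespace TrinomialTheta

open Finset Filter Topology

section Configurations

/-- The sequence `a, ω 0, ω 1, …`. -/
def consSeq (a : ℕ) (ω : ℕ → ℕ) : ℕ → ℕ
  | 0 => a
  | i + 1 => ω i

lemma consSeq_zero_tail (ω : ℕ → ℕ) : consSeq (ω 0) (fun i => ω (i + 1)) = ω := by
  funext i
  cases i <;> rfl

/-- The position `∑ i < k, ω i` of the topmost of `k` particles with gap sequence `ω`, when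
particle `k` (counted from `0` downwards) sits at site `0`. -/
def topPosition (k : ℕ) (ω : ℕ → ℕ) : ℕ := ∑ i ∈ range k, ω i

/-- The sum of the positions of the first `k` particles: particle `j` is at `∑ j ≤ i < k, ω i`, so
the gap `ω i` is counted once for each of the particles `0, …, i`. -/
def energy (k : ℕ) (ω : ℕ → ℕ) : ℕ := ∑ i ∈ range k, (i + 1) * ω i

/-- The number of doubly occupied sites, each being a zero gap, among the first `k` particles. -/
def doubles (k : ℕ) (ω : ℕ → ℕ) : ℕ := ∑ i ∈ range k, if ω i = 0 then 1 else 0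

/-- The sequence `ω` of gaps between consecutive particles, read from the top, describes `k`
particles on the sites `1, …, m` with at most two particles per site, all sites `0, -1, -2, …` being
doubly occupied. At most two particles per site means that no two consecutive gaps vanish; below
the box the gaps alternate `0, 1, 0, 1, …`. -/
structure IsConfig (m k : ℕ) (ω : ℕ → ℕ) : Prop where
  not_zero_zero : ∀ i, ¬(ω i = 0 ∧ ω (i + 1) = 0)
  tail : ∀ i, ω (k + i) = i % 2
  topPosition_le : topPosition k ω ≤ m

lemma topPosition_consSeq (a k : ℕ) (ω : ℕ → ℕ) :
    topPosition (k + 1) (consSeq a ω) = a + topPosition k ω := by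
  simp only [topPosition, sum_range_succ', consSeq, add_comm]

lemma doubles_consSeq (a k : ℕ) (ω : ℕ → ℕ) :
    doubles (k + 1) (consSeq a ω) = (if a = 0 then 1 else 0) + doubles k ω := by
  rw [doubles, sum_range_succ', add_comm]
  rfl

lemma energy_consSeq (a k : ℕ) (ω : ℕ → ℕ) :
    energy (k + 1) (consSeq a ω) = topPosition (k + 1) (consSeq a ω) + energy k ω := by
  simp only [energy, topPosition, sum_range_succ', consSeq, add_mul, one_mul, sum_add_distrib]
  ring

/-- Add a particle at site `m + 1` to a pair (number of particles, gap sequence). -/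
def addTop (m : ℕ) (p : ℕ × (ℕ → ℕ)) : ℕ × (ℕ → ℕ) :=
  (p.1 + 1, consSeq (m + 1 - topPosition p.1 p.2) p.2)

/-- Add a second particle at the site of the topmost particle. -/
def doubleTop (p : ℕ × (ℕ → ℕ)) : ℕ × (ℕ → ℕ) := (p.1 + 1, consSeq 0 p.2)

lemma addTop_injective (m : ℕ) : Function.Injective (addTop m) := fun p p' h => by
  obtain ⟨hk, hω⟩ := Prod.ext_iff.1 h
  exact Prod.ext (Nat.succ_injective hk) (funext fun i => congrFun hω (i + 1))

lemma doubleTop_injective : Function.Injective doubleTop := fun p p' h => by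
  obtain ⟨hk, hω⟩ := Prod.ext_iff.1 h
  exact Prod.ext (Nat.succ_injective hk) (funext fun i => congrFun hω (i + 1))

lemma isConfig_zero_iff {k : ℕ} {ω : ℕ → ℕ} :
    IsConfig 0 k ω ↔ (k, ω) = (0, fun i => i % 2) := by
  constructor
  · rintro ⟨hzero, htail, htop⟩
    have hvanish : ∀ i < k, ω i = 0 := by simpa [topPosition] using htop
    have hk : k = 0 := by
      by_contra hk
      obtain ⟨j, rfl⟩ := Nat.exists_eq_succ_of_ne_zero hk
      exact hzero j ⟨hvanish j j.lt_succ_self, htail 0⟩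
    subst hk
    exact Prod.ext rfl (funext fun i => by simpa using htail i)
  · rintro ⟨⟩
    exact ⟨fun i => by omega, fun i => by simp, by simp [topPosition]⟩

namespace IsConfig

variable {m k : ℕ} {ω : ℕ → ℕ}

lemma mono {m' : ℕ} (h : IsConfig m k ω) (hm : m ≤ m') : IsConfig m' k ω :=
  ⟨h.not_zero_zero, h.tail, h.topPosition_le.trans hm⟩

lemma isConfig_consSeq {m' a : ℕ} (h : IsConfig m k ω) (ha : ¬(a = 0 ∧ ω 0 = 0))
    (htop : a + topPosition k ω ≤ m') : IsConfig m' (k + 1) (consSeq a ω) where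
  not_zero_zero
    | 0 => ha
    | i + 1 => h.not_zero_zero i
  tail i := by rw [add_right_comm]; exact h.tail i
  topPosition_le := by rwa [topPosition_consSeq]

lemma topPosition_addTop (h : IsConfig m k ω) :
    topPosition (addTop m (k, ω)).1 (addTop m (k, ω)).2 = m + 1 := by
  have := h.topPosition_le
  simp only [addTop, topPosition_consSeq]
  omega

lemma topPosition_doubleTop_addTop (h : IsConfig m k ω) :
    topPosition (doubleTop (addTop m (k, ω))).1 (doubleTop (addTop m (k, ω))).2 = m + 1 := by
  rw [← h.topPosition_addTop]
  simp only [doubleTop, topPosition_consSeq, zero_add]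

lemma addTop_snd_zero_ne_zero (h : IsConfig m k ω) : (addTop m (k, ω)).2 0 ≠ 0 := by
  have := h.topPosition_le
  simp only [addTop, consSeq]
  omega

lemma isConfig_addTop (h : IsConfig m k ω) :
    IsConfig (m + 1) (addTop m (k, ω)).1 (addTop m (k, ω)).2 :=
  h.isConfig_consSeq (fun h0 => h.addTop_snd_zero_ne_zero h0.1)
    (by rw [← topPosition_consSeq]; exact h.topPosition_addTop.le)

lemma isConfig_doubleTop_addTop (h : IsConfig m k ω) :
    IsConfig (m + 1) (doubleTop (addTop m (k, ω))).1
      (doubleTop (addTop m (k, ω))).2 :=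
  h.isConfig_addTop.isConfig_consSeq (fun h0 => h.addTop_snd_zero_ne_zero h0.2)
    (by rw [zero_add]; exact h.topPosition_addTop.le)

lemma exists_eq_consSeq (h : IsConfig m k ω) (hpos : 0 < topPosition k ω) :
    ∃ k' a ω', k = k' + 1 ∧ ω = consSeq a ω' ∧ IsConfig (topPosition k' ω') k' ω' := by
  cases k with
  | zero => simp [topPosition] at hpos
  | succ k =>
    refine ⟨k, ω 0, fun i => ω (i + 1), rfl, (consSeq_zero_tail ω).symm,
      fun i => h.not_zero_zero (i + 1), fun i => ?_, le_rfl⟩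
    rw [← h.tail i, add_right_comm]

lemma exists_addTop_eq (h : IsConfig (m + 1) k ω) (htop : topPosition k ω = m + 1)
    (h0 : ω 0 ≠ 0) : ∃ p, IsConfig m p.1 p.2 ∧ addTop m p = (k, ω) := by
  obtain ⟨k, a, ω, rfl, rfl, h'⟩ := h.exists_eq_consSeq (by omega)
  have ha : a ≠ 0 := h0
  rw [topPosition_consSeq] at htop
  refine ⟨(k, ω), h'.mono (by omega), ?_⟩
  rw [addTop, ← htop, Nat.add_sub_cancel]

lemma exists_doubleTop_addTop_eq (h : IsConfig (m + 1) k ω) (htop : topPosition k ω = m + 1)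
    (h0 : ω 0 = 0) :
    ∃ p, IsConfig m p.1 p.2 ∧ doubleTop (addTop m p) = (k, ω) := by
  obtain ⟨k, a, ω, rfl, rfl, h'⟩ := h.exists_eq_consSeq (by omega)
  obtain rfl : a = 0 := h0
  rw [topPosition_consSeq, zero_add] at htop
  obtain ⟨p, hp, hpω⟩ := (h'.mono htop.le).exists_addTop_eq htop
    fun h1 => h.not_zero_zero 0 ⟨rfl, h1⟩
  exact ⟨p, hp, by rw [hpω, doubleTop]⟩

end IsConfig

lemma isConfig_succ_iff {m k : ℕ} {ω : ℕ → ℕ} :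
    IsConfig (m + 1) k ω ↔ IsConfig m k ω ∨
      (∃ p, IsConfig m p.1 p.2 ∧ addTop m p = (k, ω)) ∨
      ∃ p, IsConfig m p.1 p.2 ∧ doubleTop (addTop m p) = (k, ω) := by
  constructor
  · intro h
    rcases h.topPosition_le.lt_or_eq with hlt | htop
    · exact Or.inl ⟨h.not_zero_zero, h.tail, Nat.le_of_lt_succ hlt⟩
    · by_cases h0 : ω 0 = 0
      · exact Or.inr (Or.inr (h.exists_doubleTop_addTop_eq htop h0))
      · exact Or.inr (Or.inl (h.exists_addTop_eq htop h0))
  · rintro (h | ⟨p, hp, hpω⟩ | ⟨p, hp, hpω⟩)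
    · exact h.mono m.le_succ
    · simpa only [hpω] using hp.isConfig_addTop
    · simpa only [hpω] using hp.isConfig_doubleTop_addTop

open Classical in
/-- The pairs `(k, ω)` with `IsConfig m k ω`, built by adding zero, one or two particles at the
sites `1, …, m` successively. -/
noncomputable def configs : ℕ → Finset (ℕ × (ℕ → ℕ))
  | 0 => {(0, fun i => i % 2)}
  | m + 1 => configs m ∪
      ((configs m).image (addTop m) ∪ (configs m).image (doubleTop ∘ addTop m))

lemma mem_configs {m : ℕ} {p : ℕ × (ℕ → ℕ)} : p ∈ configs m ↔ IsConfig m p.1 p.2 := by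
  induction m generalizing p with
  | zero => rw [configs, mem_singleton, isConfig_zero_iff]
  | succ m ih => simp only [configs, mem_union, mem_image, ih, isConfig_succ_iff,
      Function.comp_apply]

lemma sum_configs_succ {M : Type*} [AddCommMonoid M] (m : ℕ) (f : ℕ × (ℕ → ℕ) → M) :
    ∑ p ∈ configs (m + 1), f p = ∑ p ∈ configs m, f p +
      (∑ p ∈ configs m, f (addTop m p) + ∑ p ∈ configs m, f (doubleTop (addTop m p))) := by
  classical
  have hone : Disjoint ((configs m).image (addTop m))
      ((configs m).image (doubleTop ∘ addTop m)) := by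
    simp only [disjoint_left, mem_image, mem_configs, not_exists, not_and]
    rintro _ ⟨p, hp, rfl⟩ p' - h
    refine hp.addTop_snd_zero_ne_zero ?_
    rw [← h]
    rfl
  have htwo : Disjoint (configs m) ((configs m).image (addTop m) ∪
      (configs m).image (doubleTop ∘ addTop m)) := by
    simp only [disjoint_left, mem_union, mem_image, mem_configs]
    rintro p hp (⟨p', hp', rfl⟩ | ⟨p', hp', rfl⟩)
    · exact absurd hp.topPosition_le (by rw [hp'.topPosition_addTop]; omega)
    · exact absurd hp.topPosition_le
        (by rw [Function.comp_apply, hp'.topPosition_doubleTop_addTop]; omega)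
  rw [configs, sum_union (htwo), sum_union (hone),
    sum_image (addTop_injective m).injOn,
    sum_image (doubleTop_injective.comp (addTop_injective m)).injOn]
  rfl

theorem sum_configs {R : Type*} [CommSemiring R] (q c y : R) (m : ℕ) :
    ∑ p ∈ configs m, q ^ energy p.1 p.2 * c ^ doubles p.1 p.2 * y ^ p.1 =
      ∏ s ∈ range m, (1 + q ^ (s + 1) * y + c * (q ^ (s + 1) * y) ^ 2) := by
  induction m with
  | zero => simp [configs, energy, doubles]
  | succ m ih =>
    have energy_addTop {p} (hp : p ∈ configs m) :
        energy (addTop m p).1 (addTop m p).2 = m + 1 + energy p.1 p.2 := by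
      rw [← (mem_configs.1 hp).topPosition_addTop]
      exact energy_consSeq _ _ _
    have energy_doubleTop {p} (hp : p ∈ configs m) :
        energy (doubleTop (addTop m p)).1 (doubleTop (addTop m p)).2 =
          m + 1 + (m + 1 + energy p.1 p.2) := by
      rw [← energy_addTop hp, ← (mem_configs.1 hp).topPosition_doubleTop_addTop]
      exact energy_consSeq _ _ _
    have doubles_addTop {p} (hp : p ∈ configs m) :
        doubles (addTop m p).1 (addTop m p).2 = doubles p.1 p.2 := by
      have h0 : m + 1 - topPosition p.1 p.2 ≠ 0 := (mem_configs.1 hp).addTop_snd_zero_ne_zero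
      simp only [addTop, doubles_consSeq, if_neg h0, zero_add]
    have doubles_doubleTop {p} (hp : p ∈ configs m) :
        doubles (doubleTop (addTop m p)).1 (doubleTop (addTop m p)).2 = 1 + doubles p.1 p.2 := by
      rw [← doubles_addTop hp]
      simp only [doubleTop, doubles_consSeq, if_true]
    rw [prod_range_succ, ← ih, sum_configs_succ, mul_add, mul_add, mul_one, sum_mul, sum_mul,
      add_assoc]
    congr 2 <;> refine sum_congr rfl fun p hp => ?_
    · rw [energy_addTop hp, doubles_addTop hp, addTop]
      ring
    · rw [energy_doubleTop hp, doubles_doubleTop hp, doubleTop, addTop]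
      ring

end Configurations

section GapSequences

variable {j : ℕ} {ω : ℕ → ℕ}

lemma IsConfig.eq_ite_of_le {m : ℕ} (h : IsConfig m (2 * j + 1) ω) (n : ℕ) (hn : n ≥ 2 * j + 1) :
    ω n = if (n + 1) % 2 = 1 then 1 else 0 := by
  obtain ⟨i, rfl⟩ := Nat.exists_eq_add_of_le hn
  rw [h.tail]
  split_ifs <;> omega

lemma IsConfig.mem_Ho {m : ℕ} (h : IsConfig m (2 * j + 1) ω) : ω ∈ Ho :=
  ⟨h.not_zero_zero, 2 * j + 1, h.eq_ite_of_le⟩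

lemma sum_odd_range (j : ℕ) :
    ∑ n ∈ range (2 * j + 1), (if (n + 1) % 2 = 0 then (0 : ℤ) else n + 1) = (j + 1) ^ 2 := by
  induction j with
  | zero => simp
  | succ j ih =>
    rw [show 2 * (j + 1) + 1 = 2 * j + 1 + 1 + 1 by ring, sum_range_succ, sum_range_succ, ih,
      if_pos (by omega), if_neg (by omega)]
    push_cast
    ring

lemma sum_even_indicator_range (j : ℕ) :
    ∑ n ∈ range (2 * j + 1), (if (n + 1) % 2 = 0 then (1 : ℤ) else 0) = j := by
  induction j with
  | zero => simp
  | succ j ih =>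
    rw [show 2 * (j + 1) + 1 = 2 * j + 1 + 1 + 1 by ring, sum_range_succ, sum_range_succ, ih,
      if_pos (by omega), if_neg (by omega)]
    push_cast
    ring

lemma A'fun_eq_energy_sub (h : ∀ n ≥ 2 * j + 1, ω n = if (n + 1) % 2 = 1 then 1 else 0) :
    A'fun ω = energy (2 * j + 1) ω - (j + 1) ^ 2 := by
  rw [A'fun, finsum_eq_sum_of_support_subset (s := range (2 * j + 1)), ← sum_odd_range, energy,
    Nat.cast_sum, ← sum_sub_distrib]
  · refine sum_congr rfl fun n _ => ?_
    push_cast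
    split_ifs <;> ring
  · refine Function.support_subset_iff'.2 fun n hn => ?_
    rw [h n (by simpa using hn)]
    split_ifs <;> omega

lemma B'fun_eq_sub_doubles (h : ∀ n ≥ 2 * j + 1, ω n = if (n + 1) % 2 = 1 then 1 else 0) :
    B'fun ω = 2 * (j - doubles (2 * j + 1) ω) := by
  rw [B'fun, finsum_eq_sum_of_support_subset (s := range (2 * j + 1)),
    finsum_eq_sum_of_support_subset (s := range (2 * j + 1)), ← sum_even_indicator_range j,
    doubles, Nat.cast_sum, ← sum_sub_distrib, ← sum_sub_distrib]
  · congr 1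
    refine sum_congr rfl fun n _ => ?_
    split_ifs <;> omega
  all_goals
    refine Function.support_subset_iff'.2 fun n hn => if_neg fun hω => ?_
    have := h n (by simpa using hn)
    split_ifs at this <;> omega

lemma topPosition_two_mul_add {N : ℕ} (h : ∀ n ≥ N, ω n = if (n + 1) % 2 = 1 then 1 else 0)
    (i : ℕ) :
    topPosition (2 * (N + i) + 1) ω = topPosition (2 * N + 1) ω + i := by
  induction i with
  | zero => rfl
  | succ i ih =>
    rw [show 2 * (N + (i + 1)) + 1 = 2 * (N + i) + 1 + 1 + 1 by ring, topPosition, sum_range_succ,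
      sum_range_succ, ← topPosition, ih, h _ (by omega), h _ (by omega), if_neg (by omega),
      if_pos (by omega)]
    rfl

lemma eventually_isConfig (hω : ω ∈ Ho) (l : ℤ) :
    ∀ᶠ n : ℕ in atTop, ∃ j : ℕ, (j : ℤ) = l + n ∧ IsConfig (2 * n) (2 * j + 1) ω := by
  obtain ⟨hzero, N, hN⟩ := hω
  filter_upwards [eventually_ge_atTop (N + topPosition (2 * N + 1) ω + l.natAbs)] with n hn
  obtain ⟨i, hi⟩ : ∃ i : ℕ, (i : ℤ) = l + n - N := ⟨(l + n - N).toNat, by omega⟩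
  refine ⟨N + i, by push_cast; omega, hzero, fun i' => ?_, ?_⟩
  · rw [hN _ (by omega)]
    split_ifs <;> omega
  · rw [topPosition_two_mul_add hN]
    omega

end GapSequences

section States

/-- The configuration on `2 n` sites with gap sequence `ω` and `2 (l + n) + 1` particles, as a
pair (number of particles, gap sequence). Its excess over one particle per site is `2 l + 1`. -/
def oddConfig (n : ℕ) (x : ℤ × Ho) : ℕ × (ℕ → ℕ) := ((2 * (x.1 + n) + 1).toNat, x.2)

lemma oddConfig_eq {n j : ℕ} {x : ℤ × Ho} (hj : (j : ℤ) = x.1 + n) :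
    oddConfig n x = (2 * j + 1, x.2.1) :=
  Prod.ext (by simp only [oddConfig]; omega) rfl

lemma exists_of_odd_oddConfig {n : ℕ} {x : ℤ × Ho} (hx : Odd (oddConfig n x).1) :
    ∃ j : ℕ, (j : ℤ) = x.1 + n := by
  obtain ⟨j, hj⟩ := hx
  simp only [oddConfig] at hj
  exact ⟨j, by omega⟩

lemma injOn_oddConfig (n : ℕ) : Set.InjOn (oddConfig n) {x | Odd (oddConfig n x).1} := by
  intro x hx x' hx' h
  obtain ⟨j, hj⟩ := exists_of_odd_oddConfig hx
  obtain ⟨j', hj'⟩ := exists_of_odd_oddConfig hx'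
  rw [oddConfig_eq hj, oddConfig_eq hj', Prod.mk.injEq] at h
  exact Prod.ext (by omega) (Subtype.ext h.2)

/-- The pairs `(l, ω)` for which `oddConfig n (l, ω)` is a configuration on `2 n` sites. -/
noncomputable def oddStates (n : ℕ) : Finset (ℤ × Ho) :=
  ((configs (2 * n)).filter fun p => Odd p.1).preimage (oddConfig n)
    ((injOn_oddConfig n).mono fun x hx => show Odd (oddConfig n x).1 from (mem_filter.1 hx).2)

lemma mem_oddStates {n : ℕ} {x : ℤ × Ho} :
    x ∈ oddStates n ↔ ∃ j : ℕ, (j : ℤ) = x.1 + n ∧ IsConfig (2 * n) (2 * j + 1) x.2 := by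
  rw [oddStates, mem_preimage, mem_filter, mem_configs]
  constructor
  · rintro ⟨h, hodd⟩
    obtain ⟨j, hj⟩ := exists_of_odd_oddConfig hodd
    rw [oddConfig_eq hj] at h
    exact ⟨j, hj, h⟩
  · rintro ⟨j, hj, h⟩
    rw [oddConfig_eq hj]
    exact ⟨h, odd_two_mul_add_one j⟩

lemma tendsto_oddStates : Tendsto oddStates atTop atTop := by
  refine tendsto_atTop.2 fun u => (eventually_all_finset u).2 fun x _ => ?_
  filter_upwards [eventually_isConfig x.2.2 x.1] with n hn
  exact mem_oddStates.2 hn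

lemma sum_oddStates {M : Type*} [AddCommMonoid M] (n : ℕ) (f : ℕ × (ℕ → ℕ) → M) :
    ∑ x ∈ oddStates n, f (oddConfig n x) =
      ∑ p ∈ (configs (2 * n)).filter fun p => Odd p.1, f p := by
  refine sum_preimage _ _ _ f fun p hp hrange => absurd ?_ hrange
  obtain ⟨hp, j, hj⟩ := mem_filter.1 hp
  have hmem : p.2 ∈ Ho := (hj ▸ mem_configs.1 hp).mem_Ho
  refine ⟨((j : ℤ) - n, ⟨p.2, hmem⟩), ?_⟩
  rw [oddConfig_eq (j := j) (sub_add_cancel _ _).symm, ← hj]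

end States

section TruncatedProduct

variable {K : Type*} [Field K]

/-- The generating polynomial of the occupation number of one site, a single particle having
weight `t`. -/
def siteFactor (t y : K) : K := 1 + t * y + y ^ 2

lemma siteFactor_eq_sq_mul_inv (t : K) {y : K} (hy : y ≠ 0) :
    siteFactor t y = y ^ 2 * siteFactor t y⁻¹ := by
  simp only [siteFactor]
  field_simp
  ring

/-- The first `n` factors of the two-sided product; its `2 n` site factors belong to the sites
`1 - n, …, n`, site `s` having the variable `q ^ s * z` up to inversion. -/
def truncatedProduct (q t z : K) (n : ℕ) : K :=
  ∏ i ∈ range n, siteFactor t (q ^ (i + 1) * z) * siteFactor t (q ^ i * z⁻¹)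

variable {q t z : K}

lemma prod_range_pow_mul_inv_sq (hq : q ≠ 0) (hz : z ≠ 0) (n : ℕ) :
    ∏ i ∈ range n, (q ^ i * z⁻¹) ^ 2 = q ^ ((n : ℤ) * (n - 1)) * z ^ (-2 * n : ℤ) := by
  induction n with
  | zero => simp
  | succ n ih =>
    rw [prod_range_succ, ih,
      show (((n + 1 : ℕ) : ℤ) * ((n + 1 : ℕ) - 1)) = n * (n - 1) + (n * 2 : ℕ) by push_cast; ring,
      show (-2 * (n + 1 : ℕ) : ℤ) = -2 * n - (2 : ℕ) by push_cast; ring,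
      zpow_add₀ hq, zpow_sub₀ hz, zpow_natCast, zpow_natCast]
    ring

lemma truncatedProduct_eq_mul_prod (hq : q ≠ 0) (hz : z ≠ 0) (n : ℕ) :
    truncatedProduct q t z n = q ^ ((n : ℤ) * (n - 1)) * z ^ (-2 * n : ℤ) *
      ∏ s ∈ range (2 * n), siteFactor t (q ^ (s + 1) * (q ^ (-n : ℤ) * z)) := by
  have hupper (i : ℕ) : q ^ (n + i + 1) * (q ^ (-n : ℤ) * z) = q ^ (i + 1) * z := by
    rw [zpow_neg, zpow_natCast, add_assoc, pow_add]
    field_simp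
  -- `siteFactor t` is palindromic, so the factors in `z⁻¹` are the lower `n` sites of one box.
  have hlower : ∀ i ∈ range n, siteFactor t (q ^ i * z⁻¹) = (q ^ i * z⁻¹) ^ 2 *
      siteFactor t (q ^ (n - 1 - i + 1) * (q ^ (-n : ℤ) * z)) := by
    intro i hi
    have hn : n = n - 1 - i + 1 + i := by have := mem_range.1 hi; omega
    have hsite : q ^ (n - 1 - i + 1) * (q ^ (-n : ℤ) * z) = (q ^ i * z⁻¹)⁻¹ := by
      rw [zpow_neg, zpow_natCast]
      nth_rw 2 [hn]
      rw [pow_add q (n - 1 - i + 1) i]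
      field_simp
    rw [hsite,
      ← siteFactor_eq_sq_mul_inv t (mul_ne_zero (pow_ne_zero _ hq) (inv_ne_zero hz))]
  rw [truncatedProduct, prod_mul_distrib, prod_congr rfl hlower, prod_mul_distrib,
    prod_range_pow_mul_inv_sq hq hz,
    prod_range_reflect (fun s => siteFactor t (q ^ (s + 1) * (q ^ (-n : ℤ) * z))), two_mul,
    prod_range_add]
  simp only [hupper]
  ring

/-- The monomial contributed by the configuration `p = (k, ω)` to `truncatedProduct q t z n`. Moving
the `k` particles from the sites `1, …, 2 n` to `1 - n, …, n` lowers the energy by `n * k`, and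
measuring it from doubly occupied sites `1 - n, …, 0` adds `n * (n - 1)`. -/
def configWeight (q t z : K) (n : ℕ) (p : ℕ × (ℕ → ℕ)) : K :=
  q ^ (energy p.1 p.2 - n * p.1 + n * (n - 1) : ℤ) * t ^ (p.1 - 2 * doubles p.1 p.2 : ℤ) *
    z ^ (p.1 - 2 * n : ℤ)

lemma truncatedProduct_eq_sum_configWeight (hq : q ≠ 0) (ht : t ≠ 0) (hz : z ≠ 0) (n : ℕ) :
    truncatedProduct q t z n = ∑ p ∈ configs (2 * n), configWeight q t z n p := by
  have hsite (y : K) : siteFactor t y = 1 + t * y + (t ^ 2)⁻¹ * (t * y) ^ 2 := by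
    simp only [siteFactor]
    field_simp
  have hcomm (s : ℕ) : t * (q ^ (s + 1) * (q ^ (-n : ℤ) * z)) =
      q ^ (s + 1) * (t * (q ^ (-n : ℤ) * z)) := mul_left_comm _ _ _
  simp only [truncatedProduct_eq_mul_prod hq hz, hsite, hcomm, ← sum_configs, mul_sum]
  refine sum_congr rfl fun p _ => ?_
  have hshift : (t * (q ^ (-n : ℤ) * z)) ^ p.1 = t ^ p.1 * (q ^ (n * p.1 : ℤ))⁻¹ * z ^ p.1 := by
    rw [mul_pow, mul_pow, ← zpow_natCast (q ^ _), ← zpow_mul, neg_mul, zpow_neg, mul_assoc]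
  have hdoubles : (t ^ 2)⁻¹ ^ doubles p.1 p.2 = (t ^ (2 * doubles p.1 p.2 : ℤ))⁻¹ := by
    rw [inv_pow, zpow_mul]
    norm_cast
  rw [configWeight, hshift, hdoubles, zpow_add₀ hq, zpow_sub₀ hq, zpow_sub₀ ht, zpow_sub₀ hz,
    neg_mul, zpow_neg]
  simp only [zpow_natCast]
  ring

lemma configWeight_sub_neg (n : ℕ) (p : ℕ × (ℕ → ℕ)) :
    configWeight q t z n p - configWeight q t (-z) n p =
      if Odd p.1 then 2 * configWeight q t z n p else 0 := by
  simp only [configWeight]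
  split_ifs with h
  · have : Odd ((p.1 : ℤ) - 2 * n) := by
      rw [Int.odd_sub, Int.odd_coe_nat]
      simp [h]
    rw [this.neg_zpow]
    ring
  · have : Even ((p.1 : ℤ) - 2 * n) := by
      rw [Int.even_sub, Int.even_coe_nat]
      simp [Nat.not_odd_iff_even.1 h]
    rw [this.neg_zpow, sub_self]

/-- The summand of the product of the series over `Ho` and over `ℤ`. -/
noncomputable def stateWeight (q t z : K) (x : ℤ × Ho) : K :=
  (q ^ A'fun x.2 * t ^ B'fun x.2) * (q ^ ((x.1 + 1) ^ 2) * z ^ (2 * x.1 + 1))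

lemma configWeight_oddConfig (hq : q ≠ 0) (ht : t ≠ 0) {n : ℕ} {x : ℤ × Ho}
    (hx : x ∈ oddStates n) :
    configWeight q t z n (oddConfig n x) = t * stateWeight q t z x := by
  obtain ⟨j, hj, h⟩ := mem_oddStates.1 hx
  obtain ⟨l, ω⟩ := x
  obtain rfl : l = j - n := eq_sub_of_add_eq hj.symm
  have hq_exp : (energy (2 * j + 1) ω - n * (2 * j + 1 : ℕ) + n * (n - 1) : ℤ) =
      A'fun ω + (j - n + 1) ^ 2 := by
    rw [A'fun_eq_energy_sub h.eq_ite_of_le]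
    push_cast
    ring
  have ht_exp : ((2 * j + 1 : ℕ) - 2 * doubles (2 * j + 1) ω : ℤ) = 1 + B'fun ω := by
    rw [B'fun_eq_sub_doubles h.eq_ite_of_le]
    push_cast
    ring
  have hz_exp : ((2 * j + 1 : ℕ) - 2 * n : ℤ) = 2 * (j - n) + 1 := by
    push_cast
    ring
  rw [oddConfig_eq hj, configWeight, stateWeight, hq_exp, ht_exp, hz_exp, zpow_add₀ hq,
    zpow_add₀ ht, zpow_one]
  ring

theorem truncatedProduct_sub_neg (hq : q ≠ 0) (ht : t ≠ 0) (hz : z ≠ 0) (n : ℕ) :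
    truncatedProduct q t z n - truncatedProduct q t (-z) n =
      2 * t * ∑ x ∈ oddStates n, stateWeight q t z x := by
  rw [truncatedProduct_eq_sum_configWeight hq ht hz,
    truncatedProduct_eq_sum_configWeight hq ht (neg_ne_zero.2 hz), ← sum_sub_distrib,
    sum_congr rfl fun p _ => configWeight_sub_neg n p, ← sum_filter, ← mul_sum, ← sum_oddStates,
    sum_congr rfl fun x hx => configWeight_oddConfig hq ht hx, ← mul_sum, mul_assoc]

end TruncatedProduct

section InfiniteProduct

variable {𝕜 : Type*} [NormedField 𝕜]

lemma norm_stateWeight (q t z : 𝕜) (x : ℤ × Ho) :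
    ‖stateWeight q t z x‖ = stateWeight ‖q‖ ‖t‖ ‖z‖ x := by
  simp only [stateWeight, norm_mul, norm_zpow]

lemma stateWeight_nonneg {q t z : ℝ} (hq : 0 ≤ q) (ht : 0 ≤ t) (hz : 0 ≤ z) (x : ℤ × Ho) :
    0 ≤ stateWeight q t z x := by
  unfold stateWeight
  positivity

lemma summable_of_tendsto_sum {ι κ : Type*} {f : ι → ℝ} (hf : 0 ≤ f) {u : Filter κ} [u.NeBot]
    {s : κ → Finset ι} {c : ℝ} (hs : Tendsto s u atTop)
    (hc : Tendsto (fun n => ∑ i ∈ s n, f i) u (𝓝 c)) : Summable f :=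
  summable_of_sum_le hf fun v => ge_of_tendsto hc <| by
    filter_upwards [hs.eventually_ge_atTop v] with n hn
    exact sum_le_sum_of_subset_of_nonneg hn fun i _ _ => hf i

variable {q t z : 𝕜}

lemma multipliable_siteFactor [CompleteSpace 𝕜] (hq : ‖q‖ < 1) (t y : 𝕜) :
    Multipliable fun i : ℕ => siteFactor t (q ^ i * y) := by
  have hgeom : Summable fun i : ℕ => ‖q ^ i‖ := by
    simpa only [norm_pow] using summable_geometric_of_lt_one (norm_nonneg q) hq
  have hsq : Summable fun i : ℕ => ‖q ^ i‖ ^ 2 := by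
    simpa only [norm_pow, ← pow_mul, mul_comm] using
      summable_geometric_of_lt_one (sq_nonneg ‖q‖) (pow_lt_one₀ (norm_nonneg q) hq two_ne_zero)
  simp only [siteFactor, add_assoc]
  refine multipliable_one_add_of_summable <|
    .of_nonneg_of_le (fun i => norm_nonneg _) (fun i => norm_add_le _ _) ?_
  simp only [norm_mul, norm_pow, mul_pow] at hgeom hsq ⊢
  exact ((hgeom.mul_right ‖y‖).mul_left ‖t‖).add (hsq.mul_right (‖y‖ ^ 2))

lemma multipliable_siteFactor_mul_siteFactor [CompleteSpace 𝕜] (hq : ‖q‖ < 1)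
    (t z : 𝕜) :
    Multipliable fun i : ℕ =>
      siteFactor t (q ^ (i + 1) * z) * siteFactor t (q ^ i * z⁻¹) := by
  simpa only [pow_succ, mul_assoc] using
    (multipliable_siteFactor hq t (q * z)).mul (multipliable_siteFactor hq t z⁻¹)

/-- The limit of `truncatedProduct q t z`. -/
noncomputable def twoSidedProduct (q t z : 𝕜) : 𝕜 :=
  ∏' i : ℕ, siteFactor t (q ^ (i + 1) * z) * siteFactor t (q ^ i * z⁻¹)

lemma tendsto_truncatedProduct [CompleteSpace 𝕜] (hq : ‖q‖ < 1) (t z : 𝕜) :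
    Tendsto (truncatedProduct q t z) atTop (𝓝 (twoSidedProduct q t z)) :=
  (multipliable_siteFactor_mul_siteFactor hq t z).tendsto_prod_tprod_nat

lemma tendsto_sum_stateWeight [CompleteSpace 𝕜] (hq0 : q ≠ 0) (hq1 : ‖q‖ < 1) (ht : t ≠ 0)
    (hz : z ≠ 0) :
    Tendsto (fun n => 2 * t * ∑ x ∈ oddStates n, stateWeight q t z x) atTop
      (𝓝 (twoSidedProduct q t z - twoSidedProduct q t (-z))) :=
  ((tendsto_truncatedProduct hq1 t z).sub (tendsto_truncatedProduct hq1 t (-z))).congr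
    (truncatedProduct_sub_neg hq0 ht hz)

lemma summable_norm_stateWeight (hq0 : q ≠ 0) (hq1 : ‖q‖ < 1) (ht : t ≠ 0) (hz : z ≠ 0) :
    Summable fun x => ‖stateWeight q t z x‖ := by
  simp only [norm_stateWeight]
  have h2t : 2 * ‖t‖ ≠ 0 := by positivity
  have h := (tendsto_sum_stateWeight (norm_ne_zero_iff.2 hq0) (by rwa [norm_norm])
    (norm_ne_zero_iff.2 ht) (norm_ne_zero_iff.2 hz)).const_mul (2 * ‖t‖)⁻¹
  simp only [inv_mul_cancel_left₀ h2t] at h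
  exact summable_of_tendsto_sum
    (stateWeight_nonneg (norm_nonneg q) (norm_nonneg t) (norm_nonneg z)) tendsto_oddStates h

theorem hasSum_stateWeight [CompleteSpace 𝕜] (hq0 : q ≠ 0) (hq1 : ‖q‖ < 1) (ht : t ≠ 0)
    (hz : z ≠ 0) :
    HasSum (fun x => 2 * t * stateWeight q t z x)
      (twoSidedProduct q t z - twoSidedProduct q t (-z)) := by
  have hsum := ((summable_norm_stateWeight hq0 hq1 ht hz).of_norm.hasSum.mul_left (2 * t))
  have hlim := hsum.comp tendsto_oddStates
  simp only [Function.comp_def, ← mul_sum] at hlim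
  rwa [tendsto_nhds_unique hlim (tendsto_sum_stateWeight hq0 hq1 ht hz)] at hsum

lemma summable_norm_gapSeries (hq0 : q ≠ 0) (hq1 : ‖q‖ < 1) (ht : t ≠ 0) :
    Summable fun ω : Ho => ‖q ^ A'fun ω.1 * t ^ B'fun ω.1‖ := by
  have h := (summable_norm_stateWeight hq0 hq1 ht one_ne_zero).prod_factor 0
  simp only [stateWeight, norm_mul (_ * _) (_ * _)] at h
  exact (summable_mul_right_iff (by simpa using hq0)).1 h

lemma nonempty_Ho : Ho.Nonempty :=
  ⟨fun n => (n + 1) % 2, fun n => by dsimp only; omega, 0,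
    fun n _ => by dsimp only; split_ifs <;> omega⟩

lemma summable_norm_theta (hq0 : q ≠ 0) (hq1 : ‖q‖ < 1) (hz : z ≠ 0) :
    Summable fun l : ℤ => ‖q ^ ((l + 1) ^ 2) * z ^ (2 * l + 1)‖ := by
  obtain ⟨ω, hω⟩ := nonempty_Ho
  have h := (summable_norm_stateWeight hq0 hq1 one_ne_zero hz).prod_symm.prod_factor ⟨ω, hω⟩
  simp only [stateWeight, Prod.swap, norm_mul (_ * _) (_ * _)] at h
  exact (summable_mul_left_iff (by simp [zpow_ne_zero, hq0])).1 h

end InfiniteProduct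

end TrinomialTheta

open TrinomialTheta in
theorem statement12_general {𝕜 : Type*} [NormedField 𝕜] [CompleteSpace 𝕜] {q t z : 𝕜}
    (hq0 : q ≠ 0) (hq1 : ‖q‖ < 1) (ht : t ≠ 0) (hz : z ≠ 0) :
    Summable (fun ℓ : ℤ => q ^ ((ℓ + 1) ^ 2) * z ^ (2 * ℓ + 1)) ∧
    Multipliable (fun i : ℕ =>
      (1 + t * q ^ (i + 1) * z + q ^ (2 * (i + 1)) * z ^ 2) *
      (1 + t * q ^ i * z⁻¹ + q ^ (2 * i) * z⁻¹ ^ 2)) ∧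
    Multipliable (fun i : ℕ =>
      (1 - t * q ^ (i + 1) * z + q ^ (2 * (i + 1)) * z ^ 2) *
      (1 - t * q ^ i * z⁻¹ + q ^ (2 * i) * z⁻¹ ^ 2)) ∧
    2 * t * (∑' ω : Ho, q ^ A'fun ω.1 * t ^ B'fun ω.1) *
        (∑' ℓ : ℤ, q ^ ((ℓ + 1) ^ 2) * z ^ (2 * ℓ + 1)) =
      (∏' i : ℕ, (1 + t * q ^ (i + 1) * z + q ^ (2 * (i + 1)) * z ^ 2) *
        (1 + t * q ^ i * z⁻¹ + q ^ (2 * i) * z⁻¹ ^ 2)) -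
      (∏' i : ℕ, (1 - t * q ^ (i + 1) * z + q ^ (2 * (i + 1)) * z ^ 2) *
        (1 - t * q ^ i * z⁻¹ + q ^ (2 * i) * z⁻¹ ^ 2)) := by
  have hpos (i : ℕ) : (1 + t * q ^ (i + 1) * z + q ^ (2 * (i + 1)) * z ^ 2) *
      (1 + t * q ^ i * z⁻¹ + q ^ (2 * i) * z⁻¹ ^ 2) =
        siteFactor t (q ^ (i + 1) * z) * siteFactor t (q ^ i * z⁻¹) := by
    simp only [siteFactor]
    ring
  have hneg (i : ℕ) : (1 - t * q ^ (i + 1) * z + q ^ (2 * (i + 1)) * z ^ 2) *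
      (1 - t * q ^ i * z⁻¹ + q ^ (2 * i) * z⁻¹ ^ 2) =
        siteFactor t (q ^ (i + 1) * -z) * siteFactor t (q ^ i * (-z)⁻¹) := by
    simp only [siteFactor, inv_neg]
    ring
  simp only [hpos, hneg]
  have htheta := summable_norm_theta hq0 hq1 hz
  refine ⟨htheta.of_norm, multipliable_siteFactor_mul_siteFactor hq1 t z,
    multipliable_siteFactor_mul_siteFactor hq1 t (-z), ?_⟩
  refine Eq.trans ?_ (hasSum_stateWeight hq0 hq1 ht hz).tsum_eq
  rw [tsum_mul_left, mul_assoc, mul_comm (∑' _ : Ho, _),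
    tsum_mul_tsum_of_summable_norm htheta (summable_norm_gapSeries hq0 hq1 ht)]
  simp only [stateWeight, mul_comm]

theorem statement12 (q z : ℝ) (hq0 : 0 < q) (hq1 : q < 1) (hz : 0 < z) :
    Summable (fun ℓ : ℤ => q ^ ((ℓ + 1) ^ 2) * z ^ (2 * ℓ + 1)) ∧
    Multipliable (fun i : ℕ =>
      (1 + q ^ (i + 1) * z + q ^ (2 * (i + 1)) * z ^ 2) *
      (1 + q ^ i * z⁻¹ + q ^ (2 * i) * z⁻¹ ^ 2)) ∧
    Multipliable (fun i : ℕ =>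
      (1 - q ^ (i + 1) * z + q ^ (2 * (i + 1)) * z ^ 2) *
      (1 - q ^ i * z⁻¹ + q ^ (2 * i) * z⁻¹ ^ 2)) ∧
    2 * Sodd q 1 * (∑' ℓ : ℤ, q ^ ((ℓ + 1) ^ 2) * z ^ (2 * ℓ + 1)) =
      (∏' i : ℕ, (1 + q ^ (i + 1) * z + q ^ (2 * (i + 1)) * z ^ 2) *
        (1 + q ^ i * z⁻¹ + q ^ (2 * i) * z⁻¹ ^ 2)) -
      (∏' i : ℕ, (1 - q ^ (i + 1) * z + q ^ (2 * (i + 1)) * z ^ 2) *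
        (1 - q ^ i * z⁻¹ + q ^ (2 * i) * z⁻¹ ^ 2)) := by
  simpa only [Sodd, one_mul, mul_one] using statement12_general hq0.ne'
    (by rwa [Real.norm_of_nonneg hq0.le]) one_ne_zero hz.ne'
end
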